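/- Assume d ≤ 1 (and 0 < d < n−1). Then for every u ∈ W there exists a sequence (u_k) of functions in C_c^∞(ℝⁿ) such that u_k → u in L¹_loc(ℝⁿ) and ‖u_k − u‖_W → 0. In particular, compactly supported smooth functions are dense in W for the seminorm ‖·‖_W, with no normalization at infinity. -/

import Mathlib

open MeasureTheory Metric Set Filter
open scoped ENNReal NNReal Topology

noncomputable section

/-- Euclidean space `ℝⁿ`. -/
abbrev Euc (n : ℕ) := EuclideanSpace ℝ (Fin n)

/-- `Γ ⊆ ℝⁿ` is `d`-Ahlfors regular with constant `C₀`. -/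
def AhlforsRegular (n : ℕ) (d C₀ : ℝ) (Γ : Set (Euc n)) : Prop :=
  ∀ x ∈ Γ, ∀ r : ℝ, 0 < r →
    ENNReal.ofReal (C₀⁻¹ * r ^ d) ≤ μH[d] (Γ ∩ ball x r) ∧
      μH[d] (Γ ∩ ball x r) ≤ ENNReal.ofReal (C₀ * r ^ d)

/-- The weight `w(x) = dist(x, Γ) ^ (d + 1 - n)`. -/
def weightW (n : ℕ) (d : ℝ) (Γ : Set (Euc n)) (x : Euc n) : ℝ :=
  infDist x Γ ^ (d + 1 - (n : ℝ))

/-- The measure `m` with density `w` with respect to Lebesgue measure. -/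
def measW (n : ℕ) (d : ℝ) (Γ : Set (Euc n)) : Measure (Euc n) :=
  volume.withDensity fun x => ENNReal.ofReal (weightW n d Γ x)

/-- `v` is a distributional gradient of `u` on the open set `E`: for every smooth
compactly supported test function `φ` with support in `E`, `∫_E u ∇φ = -∫_E φ v`. -/
def IsDistribGradOn {n : ℕ} (u : Euc n → ℝ) (v : Euc n → Euc n) (E : Set (Euc n)) : Prop :=
  ∀ φ : Euc n → ℝ, ContDiff ℝ (⊤ : ℕ∞) φ → HasCompactSupport φ → tsupport φ ⊆ E →
    ∫ x in E, u x • gradient φ x = -∫ x in E, φ x • v x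

/-- The averages of `u` over small balls centered at `x` converge to `t`. -/
def HasTraceAt {n : ℕ} (u : Euc n → ℝ) (x : Euc n) (t : ℝ) : Prop :=
  Tendsto (fun ρ : ℝ => ⨍ y in ball x ρ, u y) (𝓝[>] (0 : ℝ)) (𝓝 t)

/-- `u` belongs to the weighted Sobolev space `W = Ẇ^{1,2}_w(Ω)`, `Ω = Γᶜ`, with
distributional gradient `v` on `Ω` lying in `L²(Ω, m)`. -/
structure MemW (n : ℕ) (d : ℝ) (Γ : Set (Euc n)) (u : Euc n → ℝ) (v : Euc n → Euc n) :
    Prop where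
  locInt : LocallyIntegrableOn u Γᶜ volume
  gradLocInt : LocallyIntegrableOn v Γᶜ volume
  isGrad : IsDistribGradOn u v Γᶜ
  l2 : ∫⁻ x in Γᶜ, ENNReal.ofReal (‖v x‖ ^ 2) ∂(measW n d Γ) < ⊤

/-- `u` belongs to the local space `W_r(E)`: `u ∈ L¹_loc(E)` and `φ u` (extended by `0`)
belongs to `W` for every smooth compactly supported `φ` with support in `E`. -/
def MemWrOn (n : ℕ) (d : ℝ) (Γ : Set (Euc n)) (E : Set (Euc n)) (u : Euc n → ℝ) : Prop :=
  LocallyIntegrableOn u E volume ∧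
    ∀ φ : Euc n → ℝ, ContDiff ℝ (⊤ : ℕ∞) φ → HasCompactSupport φ → tsupport φ ⊆ E →
      ∃ vφ : Euc n → Euc n, MemW n d Γ (fun x => φ x * u x) vφ

/-- Degenerate ellipticity and boundedness conditions for the matrix `A`. -/
def EllipticOn (n : ℕ) (d : ℝ) (Γ : Set (Euc n)) (A : Euc n → Euc n →L[ℝ] Euc n)
    (C₁ : ℝ) : Prop :=
  ∀ x, x ∉ Γ →
    (∀ ξ ζ : Euc n, |∑ i, A x ξ i * ζ i| ≤ C₁ * weightW n d Γ x * ‖ξ‖ * ‖ζ‖) ∧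
      ∀ ξ : Euc n, C₁⁻¹ * weightW n d Γ x * ‖ξ‖ ^ 2 ≤ ∑ i, A x ξ i * ξ i

/-- `u`, with gradient `v`, is a weak subsolution of `- div A ∇u = 0` on `U ⊆ Ω = Γᶜ`. -/
def SubsolOn {n : ℕ} (Γ : Set (Euc n)) (A : Euc n → Euc n →L[ℝ] Euc n)
    (v : Euc n → Euc n) (U : Set (Euc n)) : Prop :=
  ∀ φ : Euc n → ℝ, ContDiff ℝ (⊤ : ℕ∞) φ → HasCompactSupport φ → tsupport φ ⊆ U →
    (∀ x, 0 ≤ φ x) → ∫ x in Γᶜ, ∑ i, A x (v x) i * gradient φ x i ≤ 0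

/-- `u`, with gradient `v`, is a weak supersolution of `- div A ∇u = 0` on `U ⊆ Ω = Γᶜ`. -/
def SupersolOn {n : ℕ} (Γ : Set (Euc n)) (A : Euc n → Euc n →L[ℝ] Euc n)
    (v : Euc n → Euc n) (U : Set (Euc n)) : Prop :=
  ∀ φ : Euc n → ℝ, ContDiff ℝ (⊤ : ℕ∞) φ → HasCompactSupport φ → tsupport φ ⊆ U →
    (∀ x, 0 ≤ φ x) → 0 ≤ ∫ x in Γᶜ, ∑ i, A x (v x) i * gradient φ x i

/-- `u`, with gradient `v`, is a weak solution of `- div A ∇u = 0` on `U ⊆ Ω = Γᶜ`. -/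
def SolOn {n : ℕ} (Γ : Set (Euc n)) (A : Euc n → Euc n →L[ℝ] Euc n)
    (v : Euc n → Euc n) (U : Set (Euc n)) : Prop :=
  ∀ φ : Euc n → ℝ, ContDiff ℝ (⊤ : ℕ∞) φ → HasCompactSupport φ → tsupport φ ⊆ U →
    ∫ x in Γᶜ, ∑ i, A x (v x) i * gradient φ x i = 0

/-!
Replacing `u` by `N sin (u / N)` makes it bounded without increasing the gradient. Since `Γ` has
null `(n - 1)`-dimensional Minkowski content, cutoffs near `Γ` cost nothing in the limit, so the
gradient of a bounded function is a distributional gradient on all of `ℝⁿ`. Bounded functions are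
then cut off at infinity: `m (B_r) ≲ r ^ (d + 1) ≤ r ^ 2` for `d ≤ 1`, so logarithmic cutoffs, as in
the plane, have arbitrarily small energy and no normalization at infinity is needed. Finally,
mollification converges in `L²(m)` because `w` is a Muckenhoupt `A₂` weight. The Minkowski content,
growth and `A₂` bounds all follow from comparing negative powers of `dist (·, Γ)` with Riesz
potentials of `μH[d]` on `Γ`.
-/

open Module (finrank)
open scoped Convolution

section LpTools

variable {α : Type*} [MeasurableSpace α] {μ : Measure α}
  {F : Type*} [NormedAddCommGroup F] {p : ℝ≥0∞}

lemma eLpNorm_two_eq_lintegral_sq (f : α → F) (μ : Measure α) :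
    eLpNorm f 2 μ = (∫⁻ x, ‖f x‖ₑ ^ 2 ∂μ) ^ (1 / 2 : ℝ) := by
  simp [eLpNorm_eq_lintegral_rpow_enorm_toReal]

lemma eLpNorm_two_sq (f : α → F) (μ : Measure α) :
    eLpNorm f 2 μ ^ 2 = ∫⁻ x, ‖f x‖ₑ ^ 2 ∂μ := by
  rw [eLpNorm_two_eq_lintegral_sq, ← ENNReal.rpow_natCast, ← ENNReal.rpow_mul]
  simp

lemma lintegral_mul_sq_le {f g : α → ℝ≥0∞} (hf : AEMeasurable f μ) (hg : AEMeasurable g μ) :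
    (∫⁻ x, f x * g x ∂μ) ^ 2 ≤ (∫⁻ x, f x ^ 2 ∂μ) * ∫⁻ x, g x ^ 2 ∂μ := by
  have holder := ENNReal.lintegral_mul_le_Lp_mul_Lq μ Real.HolderConjugate.two_two hf hg
  simp only [Pi.mul_apply, ENNReal.rpow_ofNat] at holder
  refine (pow_le_pow_left' holder 2).trans_eq ?_
  simp only [mul_pow, ← ENNReal.rpow_mul_natCast]
  simp

lemma sq_lintegral_le_lintegral_inv_mul_withDensity {w g : α → ℝ≥0∞} (hw : Measurable w)
    (hw₀ : ∀ᵐ x ∂μ, w x ≠ 0) (hw_top : ∀ᵐ x ∂μ, w x ≠ ∞) (hg : AEMeasurable g μ) {s : Set α}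
    (hs : MeasurableSet s) :
    (∫⁻ y in s, g y ∂μ) ^ 2 ≤
      (∫⁻ y in s, (w y)⁻¹ ∂μ) * ∫⁻ y in s, g y ^ 2 ∂(μ.withDensity w) := by
  have rpow_half_sq (t : ℝ≥0∞) : (t ^ (1 / 2 : ℝ)) ^ 2 = t := by
    rw [← ENNReal.rpow_mul_natCast]; simp
  have split : ∀ᵐ y ∂(μ.restrict s),
      g y = (w y)⁻¹ ^ (1 / 2 : ℝ) * (w y ^ (1 / 2 : ℝ) * g y) := by
    filter_upwards [ae_restrict_of_ae hw₀, ae_restrict_of_ae hw_top] with y h₀ h_top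
    rw [← mul_assoc, ← ENNReal.mul_rpow_of_nonneg _ _ (by norm_num),
      ENNReal.inv_mul_cancel h₀ h_top, ENNReal.one_rpow, one_mul]
  rw [lintegral_congr_ae split, restrict_withDensity hs,
    lintegral_withDensity_eq_lintegral_mul₀ hw.aemeasurable (hg.restrict.pow_const 2)]
  refine (lintegral_mul_sq_le (hw.inv.pow_const _).aemeasurable
    ((hw.pow_const _).aemeasurable.mul hg.restrict)).trans_eq ?_
  simp only [mul_pow, rpow_half_sq, Pi.mul_apply, Pi.inv_apply]

lemma tendsto_eLpNorm_sub_of_dominated {f : ℕ → α → F} {g : α → F} {bound : α → ℝ}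
    (hp₀ : p ≠ 0) (hp : p ≠ ∞) (hf : ∀ k, AEStronglyMeasurable (f k) μ)
    (hg : AEStronglyMeasurable g μ) (hbound : MemLp bound p μ)
    (hle : ∀ k, ∀ᵐ x ∂μ, ‖f k x - g x‖ ≤ bound x)
    (hlim : ∀ᵐ x ∂μ, Tendsto (fun k => f k x) atTop (𝓝 (g x))) :
    Tendsto (fun k => eLpNorm (f k - g) p μ) atTop (𝓝 0) := by
  have hp_pos : 0 < p.toReal := ENNReal.toReal_pos hp₀ hp
  have integral_tendsto :
      Tendsto (fun k => ∫⁻ x, ‖(f k - g) x‖ₑ ^ p.toReal ∂μ) atTop (𝓝 (∫⁻ _, 0 ∂μ)) := by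
    refine tendsto_lintegral_of_dominated_convergence' (fun x => ‖bound x‖ₑ ^ p.toReal)
      (fun k => ((hf k).sub hg).enorm.pow_const _) (fun k => ?_)
      (lintegral_rpow_enorm_lt_top_of_eLpNorm_lt_top hp₀ hp hbound.2).ne ?_
    · filter_upwards [hle k] with x hx
      gcongr
      exact enorm_le_iff_norm_le.2 (hx.trans (le_abs_self _))
    · filter_upwards [hlim] with x hx
      simpa [hp_pos] using ((hx.sub_const (g x)).enorm).ennrpow_const p.toReal
  simp only [eLpNorm_eq_lintegral_rpow_enorm_toReal hp₀ hp]
  simpa [hp_pos] using integral_tendsto.ennrpow_const (1 / p.toReal)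

lemma tendsto_eLpNorm_smul_sub_self [NormedSpace ℝ F] {ψ : ℕ → α → ℝ} {f : α → F}
    (hp₀ : p ≠ 0) (hp : p ≠ ∞) (hψ : ∀ k, AEStronglyMeasurable (ψ k) μ)
    (hψ_le : ∀ k x, |ψ k x| ≤ 1) (hψ_lim : ∀ᵐ x ∂μ, Tendsto (fun k => ψ k x) atTop (𝓝 1))
    (hf : MemLp f p μ) :
    Tendsto (fun k => eLpNorm (fun x => ψ k x • f x - f x) p μ) atTop (𝓝 0) := by
  refine tendsto_eLpNorm_sub_of_dominated (bound := fun x => 2 * ‖f x‖) hp₀ hp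
    (fun k => (hψ k).smul hf.1) hf.1 (hf.norm.const_mul 2) (fun k => ae_of_all _ fun x => ?_) ?_
  · calc ‖ψ k x • f x - f x‖ ≤ |ψ k x| * ‖f x‖ + ‖f x‖ := by
          simpa [norm_smul] using norm_sub_le (ψ k x • f x) (f x)
      _ ≤ 2 * ‖f x‖ := by linarith [mul_le_of_le_one_left (norm_nonneg (f x)) (hψ_le k x)]
  · filter_upwards [hψ_lim] with x hx
    simpa using hx.smul_const (f x)

lemma tendsto_integral_smul_of_tendsto_eLpNorm [NormedSpace ℝ F] {a : ℕ → α → ℝ} {b : α → ℝ}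
    {f : ℕ → α → F} {g : α → F} {M : ℝ≥0} (ha : ∀ k, AEStronglyMeasurable (a k) μ)
    (ha_le : ∀ k x, ‖a k x‖ ≤ M) (hb : AEStronglyMeasurable b μ)
    (ha_lim : ∀ᵐ x ∂μ, Tendsto (fun k => a k x) atTop (𝓝 (b x)))
    (hf : ∀ k, Integrable (f k) μ) (hg : Integrable g μ)
    (hf_lim : Tendsto (fun k => eLpNorm (f k - g) 1 μ) atTop (𝓝 0)) :
    Tendsto (fun k => ∫ x, a k x • f k x ∂μ) atTop (𝓝 (∫ x, b x • g x ∂μ)) := by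
  have hb_le : ∀ᵐ x ∂μ, ‖b x‖ ≤ M := ha_lim.mono fun x hx =>
    le_of_tendsto hx.norm (Eventually.of_forall fun k => ha_le k x)
  have coeff_lim : Tendsto (fun k => eLpNorm (a k • g - b • g) 1 μ) atTop (𝓝 0) := by
    refine tendsto_eLpNorm_sub_of_dominated one_ne_zero ENNReal.one_ne_top
      (fun k => (ha k).smul hg.1) (hb.smul hg.1)
      (memLp_one_iff_integrable.2 (hg.norm.const_mul (2 * (M : ℝ)))) (fun k => ?_)
      (ha_lim.mono fun x hx => hx.smul_const (g x))
    filter_upwards [hb_le] with x hx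
    rw [Pi.smul_apply', Pi.smul_apply', ← sub_smul, norm_smul]
    gcongr
    linarith [norm_sub_le (a k x) (b x), ha_le k x]
  have bound_lim : Tendsto (fun k => M * eLpNorm (f k - g) 1 μ + eLpNorm (a k • g - b • g) 1 μ)
      atTop (𝓝 0) := by
    have scaled := ENNReal.Tendsto.const_mul hf_lim (.inr (ENNReal.coe_ne_top (r := M)))
    simpa using scaled.add coeff_lim
  refine tendsto_integral_of_L1' _ (hb.smul hg.1)
    (Eventually.of_forall fun k => (hf k).bdd_smul M (ha k) (ae_of_all _ (ha_le k)))
    (tendsto_of_tendsto_of_tendsto_of_le_of_le tendsto_const_nhds bound_lim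
      (fun _ => zero_le) fun k => ?_)
  calc eLpNorm (a k • f k - b • g) 1 μ
      ≤ eLpNorm (a k • (f k - g)) 1 μ + eLpNorm (a k • g - b • g) 1 μ := by
        rw [← sub_add_sub_cancel (a k • f k) (a k • g), ← smul_sub]
        exact eLpNorm_add_le ((ha k).smul ((hf k).1.sub hg.1))
          (((ha k).smul hg.1).sub (hb.smul hg.1)) le_rfl
    _ ≤ M * eLpNorm (f k - g) 1 μ + eLpNorm (a k • g - b • g) 1 μ := by
        gcongr
        refine eLpNorm_le_nnreal_smul_eLpNorm_of_ae_le_mul (ae_of_all _ fun x => ?_) 1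
        rw [Pi.smul_apply', nnnorm_smul]
        gcongr
        exact ha_le k x

lemma tendsto_eLpNorm_smul_of_bounded [NormedSpace ℝ F] {b : α → ℝ} {B : ℝ≥0}
    (hb : ∀ x, ‖b x‖ ≤ B) {f : ℕ → α → F}
    (hf : Tendsto (fun k => eLpNorm (f k) p μ) atTop (𝓝 0)) :
    Tendsto (fun k => eLpNorm (fun x => b x • f k x) p μ) atTop (𝓝 0) := by
  have bound_lim := ENNReal.Tendsto.const_mul hf (.inr (ENNReal.coe_ne_top (r := B)))
  rw [mul_zero] at bound_lim
  refine tendsto_of_tendsto_of_tendsto_of_le_of_le tendsto_const_nhds bound_lim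
    (fun _ => zero_le) fun k =>
      eLpNorm_le_nnreal_smul_eLpNorm_of_ae_le_mul (.of_forall fun x => ?_) p
  rw [nnnorm_smul]
  gcongr
  exact hb x

end LpTools

section Mollification

variable {E : Type*} [NormedAddCommGroup E]

/-- The bump function of outer radius `1 / (j + 1)` and half that inner radius; mollification
along this sequence is an approximation of the identity. -/
def shrinkingBump (E : Type*) [NormedAddCommGroup E] (j : ℕ) : ContDiffBump (0 : E) where
  rIn := 1 / (j + 1) / 2
  rOut := 1 / (j + 1)
  rIn_pos := by positivity
  rIn_lt_rOut := half_lt_self (by positivity)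

lemma shrinkingBump_rOut_eq (j : ℕ) :
    (shrinkingBump E j).rOut = 2 * (shrinkingBump E j).rIn := by
  simp only [shrinkingBump]; ring

lemma shrinkingBump_rOut_le_one (j : ℕ) : (shrinkingBump E j).rOut ≤ 1 := by
  simpa [shrinkingBump] using inv_le_one_of_one_le₀ (le_add_of_nonneg_left (Nat.cast_nonneg j))

lemma tendsto_shrinkingBump_rOut :
    Tendsto (fun j => (shrinkingBump E j).rOut) atTop (𝓝 0) :=
  tendsto_one_div_add_atTop_nhds_zero_nat

variable [NormedSpace ℝ E] [FiniteDimensional ℝ E]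
  [MeasurableSpace E] [BorelSpace E] {μ : Measure E} [μ.IsAddHaarMeasure]
  {F : Type*} [NormedAddCommGroup F] [NormedSpace ℝ F]

/-- The mollification of `f`: its convolution with the bump function `φ`, normalized to have
integral one. -/
def mollify (μ : Measure E) (φ : ContDiffBump (0 : E)) (f : E → F) : E → F :=
  φ.normed μ ⋆[ContinuousLinearMap.lsmul ℝ ℝ, μ] f

variable {φ : ContDiffBump (0 : E)} {f g : E → F}

lemma mollify_apply (x : E) : mollify μ φ f x = ∫ y, φ.normed μ (x - y) • f y ∂μ :=
  convolution_eq_swap _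

lemma integrable_normed_sub (x : E) : Integrable (fun y => φ.normed μ (x - y)) μ :=
  φ.integrable_normed.comp_sub_left x

lemma integral_normed_sub (x : E) : ∫ y, φ.normed μ (x - y) ∂μ = 1 := by
  rw [integral_sub_left_eq_self (φ.normed μ) μ x, φ.integral_normed]

lemma integrable_normed_sub_smul (hf : LocallyIntegrable f μ) (x : E) :
    Integrable (fun y => φ.normed μ (x - y) • f y) μ :=
  (φ.hasCompactSupport_normed.convolutionExists_left (ContinuousLinearMap.lsmul ℝ ℝ)
    φ.continuous_normed hf x).integrable_swap

lemma contDiff_mollify (hf : LocallyIntegrable f μ) :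
    ContDiff ℝ (⊤ : ℕ∞) (mollify μ φ f) :=
  φ.hasCompactSupport_normed.contDiff_convolution_left _ φ.contDiff_normed hf

lemma hasCompactSupport_mollify (hf : HasCompactSupport f) :
    HasCompactSupport (mollify μ φ f) :=
  φ.hasCompactSupport_normed.convolution _ hf

lemma mollify_sub (hf : LocallyIntegrable f μ) (hg : LocallyIntegrable g μ) :
    mollify μ φ (f - g) = mollify μ φ f - mollify μ φ g := by
  ext x
  simp only [mollify_apply, Pi.sub_apply, smul_sub]
  exact integral_sub (integrable_normed_sub_smul hf x) (integrable_normed_sub_smul hg x)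

lemma norm_mollify_le {B : ℝ} (hB : ∀ x, ‖f x‖ ≤ B) (x : E) : ‖mollify μ φ f x‖ ≤ B := by
  rw [mollify_apply]
  calc ‖∫ y, φ.normed μ (x - y) • f y ∂μ‖ ≤ ∫ y, φ.normed μ (x - y) * B ∂μ := by
        refine norm_integral_le_of_norm_le ((integrable_normed_sub x).mul_const B)
          (ae_of_all _ fun y => ?_)
        rw [norm_smul, Real.norm_of_nonneg (φ.nonneg_normed _)]
        exact mul_le_mul_of_nonneg_left (hB y) (φ.nonneg_normed _)
    _ = B := by rw [integral_mul_const, integral_normed_sub, one_mul]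

lemma lipschitzWith_mollify {K : ℝ≥0} (hf : LipschitzWith K f) :
    LipschitzWith K (mollify μ φ f) := by
  refine LipschitzWith.of_dist_le_mul fun x y => ?_
  have translate : mollify μ φ f x - mollify μ φ f y
      = mollify μ φ (fun z => f (z + (x - y)) - f z) y := by
    have hf_shift : LocallyIntegrable (fun z => f (z + (x - y))) μ :=
      (hf.continuous.comp (continuous_add_const _)).locallyIntegrable
    rw [← Pi.sub_def, mollify_sub hf_shift hf.continuous.locallyIntegrable, Pi.sub_apply,
      sub_left_inj, mollify_apply, mollify_apply,
      ← integral_add_right_eq_self (fun z => φ.normed μ (x - z) • f z) (x - y)]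
    congr! 4
    abel
  rw [dist_eq_norm, dist_eq_norm, translate]
  refine norm_mollify_le (fun z => ?_) y
  simpa [dist_eq_norm] using hf.dist_le_mul (z + (x - y)) z

lemma ae_tendsto_mollify [CompleteSpace F] (hf : LocallyIntegrable f μ) :
    ∀ᵐ x ∂μ, Tendsto (fun j => mollify μ (shrinkingBump E j) f x) atTop (𝓝 (f x)) :=
  ContDiffBump.ae_convolution_tendsto_right_of_locallyIntegrable
    tendsto_shrinkingBump_rOut
    (Eventually.of_forall fun j => (shrinkingBump_rOut_eq j).le) hf

lemma tendsto_mollify_of_continuous [CompleteSpace F] (hf : Continuous f) (x : E) :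
    Tendsto (fun j => mollify μ (shrinkingBump E j) f x) atTop (𝓝 (f x)) :=
  ContDiffBump.convolution_tendsto_right_of_continuous tendsto_shrinkingBump_rOut hf x

lemma mollify_congr_of_eqOn_ball {x : E} (h : EqOn f g (ball x φ.rOut)) :
    mollify μ φ f x = mollify μ φ g x := by
  simp only [mollify_apply]
  refine integral_congr_ae (ae_of_all _ fun y => ?_)
  by_cases hy : y ∈ ball x φ.rOut
  · simp only [h hy]
  · have : φ.normed μ (x - y) = 0 := by
      rw [← Function.notMem_support, φ.support_normed_eq]
      simpa [dist_eq_norm, norm_sub_rev] using hy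
    simp only [this, zero_smul]

lemma mollify_const [CompleteSpace F] (c : F) (x : E) : mollify μ φ (fun _ => c) x = c := by
  rw [mollify_apply, integral_smul_const, integral_normed_sub, one_smul]

lemma mollify_eq_zero_of_notMem_cthickening_tsupport {r : ℝ} (hr : φ.rOut ≤ r) {x : E}
    (hx : x ∉ cthickening r (tsupport f)) : mollify μ φ f x = 0 := by
  have vanish : EqOn f (fun _ => 0) (ball x φ.rOut) := fun y hy =>
    image_eq_zero_of_notMem_tsupport fun hy_supp =>
      hx (mem_cthickening_of_dist_le x y _ _ hy_supp ((mem_ball'.1 hy).le.trans hr))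
  rw [mollify_congr_of_eqOn_ball vanish, mollify_apply]
  simp only [smul_zero, integral_zero]

lemma enorm_mollify_le_average (hφ : φ.rOut = 2 * φ.rIn) (f : E → F) (x : E) :
    ‖mollify μ φ f x‖ₑ ≤
      2 ^ finrank ℝ E * (μ (ball x φ.rOut))⁻¹ * ∫⁻ y in ball x φ.rOut, ‖f y‖ₑ ∂μ := by
  have ball_lt_top : μ (ball x φ.rOut) ≠ ∞ := measure_ball_lt_top.ne
  have kernel_le (z : E) : ‖φ.normed μ z‖ₑ ≤ 2 ^ finrank ℝ E * (μ (ball x φ.rOut))⁻¹ := by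
    have ball_pos : 0 < μ.real (ball x φ.rOut) :=
      ENNReal.toReal_pos (measure_ball_pos _ _ φ.rOut_pos).ne' ball_lt_top
    have kernel_le_real : φ.normed μ z ≤ 2 ^ finrank ℝ E / μ.real (ball x φ.rOut) := by
      refine (φ.normed_le_div_measure_closedBall_rOut μ 2 hφ.le z).trans ?_
      rw [← Measure.addHaar_real_closedBall_center μ x]
      gcongr
      · exact measure_closedBall_lt_top.ne
      · exact ball_subset_closedBall
    rw [Real.enorm_eq_ofReal (φ.nonneg_normed _)]
    refine (ENNReal.ofReal_le_ofReal kernel_le_real).trans_eq ?_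
    rw [ENNReal.ofReal_div_of_pos ball_pos, ofReal_measureReal ball_lt_top,
      ENNReal.ofReal_pow zero_le_two, ENNReal.ofReal_ofNat, div_eq_mul_inv]
  have const_ne_top : 2 ^ finrank ℝ E * (μ (ball x φ.rOut))⁻¹ ≠ ∞ :=
    ENNReal.mul_ne_top (by simp) (ENNReal.inv_ne_top.2 (measure_ball_pos _ _ φ.rOut_pos).ne')
  rw [mollify_apply, ← lintegral_const_mul' _ _ const_ne_top,
    ← lintegral_indicator measurableSet_ball]
  refine (enorm_integral_le_lintegral_enorm _).trans (lintegral_mono fun y => ?_)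
  by_cases hy : y ∈ ball x φ.rOut
  · rw [indicator_of_mem hy, enorm_smul]
    gcongr
    exact kernel_le _
  · have : φ.normed μ (x - y) = 0 := by
      rw [← Function.notMem_support, φ.support_normed_eq]
      simpa [dist_eq_norm, norm_sub_rev] using hy
    simp [this]

lemma lintegral_lintegral_ball_swap (μ ν : Measure E) [SFinite μ] [SFinite ν] {h : E → ℝ≥0∞}
    (hh : AEMeasurable h ν) (r : ℝ) :
    ∫⁻ x, ∫⁻ y in ball x r, h y ∂ν ∂μ = ∫⁻ y, μ (ball y r) * h y ∂ν := by
  have near_measurable : MeasurableSet {p : E × E | dist p.2 p.1 < r} :=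
    measurableSet_lt (by fun_prop) measurable_const
  calc ∫⁻ x, ∫⁻ y in ball x r, h y ∂ν ∂μ
      = ∫⁻ x, ∫⁻ y, {p : E × E | dist p.2 p.1 < r}.indicator (fun p => h p.2) (x, y) ∂ν ∂μ := by
        simp only [← lintegral_indicator measurableSet_ball]
        rfl
    _ = ∫⁻ y, ∫⁻ x, {p : E × E | dist p.2 p.1 < r}.indicator (fun p => h p.2) (x, y) ∂μ ∂ν :=
        lintegral_lintegral_swap (hh.comp_snd.indicator near_measurable)
    _ = ∫⁻ y, ∫⁻ _ in ball y r, h y ∂μ ∂ν := by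
        simp only [← lintegral_indicator measurableSet_ball]
        simp only [indicator, mem_ofPred_eq, mem_ball, dist_comm]
    _ = ∫⁻ y, μ (ball y r) * h y ∂ν := by simp only [setLIntegral_const, mul_comm]

lemma lintegral_enorm_mollify_le (hφ : φ.rOut = 2 * φ.rIn) (hf : AEStronglyMeasurable f μ) :
    ∫⁻ x, ‖mollify μ φ f x‖ₑ ∂μ ≤ 2 ^ finrank ℝ E * ∫⁻ x, ‖f x‖ₑ ∂μ := by
  have vol_ball (x : E) : μ (ball x φ.rOut) = μ (ball 0 φ.rOut) := μ.addHaar_ball_center _ _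
  have ball_ne_zero : μ (ball 0 φ.rOut) ≠ 0 := (measure_ball_pos _ _ φ.rOut_pos).ne'
  calc ∫⁻ x, ‖mollify μ φ f x‖ₑ ∂μ
      ≤ ∫⁻ x, 2 ^ finrank ℝ E * (μ (ball 0 φ.rOut))⁻¹ *
          ∫⁻ y in ball x φ.rOut, ‖f y‖ₑ ∂μ ∂μ :=
        lintegral_mono fun x => vol_ball x ▸ enorm_mollify_le_average hφ f x
    _ = 2 ^ finrank ℝ E * (μ (ball 0 φ.rOut))⁻¹ * (μ (ball 0 φ.rOut) * ∫⁻ y, ‖f y‖ₑ ∂μ) := by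
        rw [lintegral_const_mul' _ _ (ENNReal.mul_ne_top (by simp) (by simpa using ball_ne_zero)),
          lintegral_lintegral_ball_swap μ μ hf.enorm]
        simp only [vol_ball, lintegral_const_mul' _ _ measure_ball_lt_top.ne]
    _ = 2 ^ finrank ℝ E * ∫⁻ x, ‖f x‖ₑ ∂μ := by
        rw [mul_assoc, ← mul_assoc (_⁻¹), ENNReal.inv_mul_cancel ball_ne_zero
          measure_ball_lt_top.ne, one_mul]

section Convergence

variable [CompleteSpace F] {m : Measure E} [IsLocallyFiniteMeasure m] {p : ℝ≥0∞}

lemma tendsto_eLpNorm_mollify_sub_of_continuous (hp₀ : p ≠ 0) (hp : p ≠ ∞) (hf : Continuous f)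
    (hf_supp : HasCompactSupport f) :
    Tendsto (fun j => eLpNorm (mollify μ (shrinkingBump E j) f - f) p m) atTop (𝓝 0) := by
  obtain ⟨B, hB⟩ := hf.bounded_above_of_compact_support hf_supp
  have hK : IsCompact (cthickening 1 (tsupport f)) := hf_supp.isCompact.cthickening
  refine tendsto_eLpNorm_sub_of_dominated hp₀ hp
    (bound := (cthickening 1 (tsupport f)).indicator fun _ => B + B)
    (fun j => (contDiff_mollify hf.locallyIntegrable).continuous.aestronglyMeasurable)
    hf.aestronglyMeasurable
    (memLp_indicator_const _ hK.measurableSet _ (Or.inr hK.measure_lt_top.ne))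
    (fun j => ae_of_all _ fun x => ?_) (ae_of_all _ (tendsto_mollify_of_continuous hf))
  by_cases hx : x ∈ cthickening 1 (tsupport f)
  · rw [indicator_of_mem hx]
    exact (norm_sub_le _ _).trans (add_le_add (norm_mollify_le hB x) (hB x))
  · have hfx : f x = 0 :=
      image_eq_zero_of_notMem_tsupport fun h => hx (self_subset_cthickening _ h)
    simp [indicator_of_notMem hx, hfx,
      mollify_eq_zero_of_notMem_cthickening_tsupport (shrinkingBump_rOut_le_one j) hx]

/-- Density of `C_c` reduces convergence of mollifications to a uniform bound. -/
lemma tendsto_eLpNorm_mollify_sub_of_bounded (hp₁ : 1 ≤ p) (hp : p ≠ ∞) {A : ℝ≥0∞} (hA : A ≠ ∞)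
    (bounded : ∀ j, ∀ h : E → F, MemLp h p m →
      eLpNorm (mollify μ (shrinkingBump E j) h) p m ≤ A * eLpNorm h p m)
    (hf : MemLp f p m) (hf_loc : LocallyIntegrable f μ) :
    Tendsto (fun j => eLpNorm (mollify μ (shrinkingBump E j) f - f) p m) atTop (𝓝 0) := by
  rw [ENNReal.tendsto_nhds_zero]
  intro ε hε
  set η := ε / (A + 2)
  have hη : 0 < η := ENNReal.div_pos hε.ne' (by simp [hA])
  obtain ⟨g, g_supp, hfg, g_cont, g_mem⟩ := hf.exists_hasCompactSupport_eLpNorm_sub_le hp hη.ne'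
  have g_loc : LocallyIntegrable g μ := g_cont.locallyIntegrable
  filter_upwards [ENNReal.tendsto_nhds_zero.1
    (tendsto_eLpNorm_mollify_sub_of_continuous (μ := μ) (m := m) (one_pos.trans_le hp₁).ne' hp
      g_cont g_supp) η hη] with j hj
  have split : mollify μ (shrinkingBump E j) f - f = mollify μ (shrinkingBump E j) (f - g)
      + (mollify μ (shrinkingBump E j) g - g) + (g - f) := by
    rw [mollify_sub hf_loc g_loc]; abel
  have moll_meas {h : E → F} (hh : LocallyIntegrable h μ) :
      AEStronglyMeasurable (mollify μ (shrinkingBump E j) h) m :=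
    (contDiff_mollify hh).continuous.aestronglyMeasurable
  have meas_fg := moll_meas (hf_loc.sub g_loc)
  have meas_g := (moll_meas g_loc).sub g_cont.aestronglyMeasurable
  calc eLpNorm (mollify μ (shrinkingBump E j) f - f) p m
      ≤ eLpNorm (mollify μ (shrinkingBump E j) (f - g)) p m
        + eLpNorm (mollify μ (shrinkingBump E j) g - g) p m + eLpNorm (g - f) p m := by
        rw [split]
        refine (eLpNorm_add_le (meas_fg.add meas_g) (g_mem.1.sub hf.1) hp₁).trans ?_
        gcongr
        exact eLpNorm_add_le meas_fg meas_g hp₁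
    _ ≤ A * η + η + η := by
        rw [eLpNorm_sub_comm g f]
        gcongr
        exact (bounded j _ (hf.sub g_mem)).trans (by gcongr)
    _ = (A + 2) * η := by ring
    _ ≤ ε := ENNReal.mul_div_le

lemma tendsto_eLpNorm_one_mollify_sub (hf : Integrable f μ) :
    Tendsto (fun j => eLpNorm (mollify μ (shrinkingBump E j) f - f) 1 μ) atTop (𝓝 0) := by
  refine tendsto_eLpNorm_mollify_sub_of_bounded le_rfl ENNReal.one_ne_top
    (A := 2 ^ finrank ℝ E) (by simp) (fun j h hh => ?_) (memLp_one_iff_integrable.2 hf)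
    hf.locallyIntegrable
  simpa only [eLpNorm_one_eq_lintegral_enorm] using
    lintegral_enorm_mollify_le (shrinkingBump_rOut_eq j) hh.1

lemma tendsto_eLpNorm_one_mollify_sub_restrict (hf : LocallyIntegrable f μ) {K : Set E}
    (hK : IsCompact K) :
    Tendsto (fun j => eLpNorm (mollify μ (shrinkingBump E j) f - f) 1 (μ.restrict K)) atTop
      (𝓝 0) := by
  have hK' : IsCompact (cthickening 1 K) := hK.cthickening
  refine tendsto_of_tendsto_of_tendsto_of_le_of_le tendsto_const_nhds
    (tendsto_eLpNorm_one_mollify_sub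
      ((hf.integrableOn_isCompact hK').integrable_indicator hK'.measurableSet))
    (fun _ => zero_le) fun j => ?_
  refine (eLpNorm_congr_ae ?_).trans_le (eLpNorm_restrict_le _ _ μ K)
  filter_upwards [ae_restrict_mem hK.measurableSet] with x hx
  have agree : EqOn (indicator (cthickening 1 K) f) f (ball x (shrinkingBump E j).rOut) :=
    fun y hy => indicator_of_mem (mem_cthickening_of_dist_le y x _ _ hx
      ((mem_ball.1 hy).le.trans (shrinkingBump_rOut_le_one j))) f
  rw [Pi.sub_apply, Pi.sub_apply, mollify_congr_of_eqOn_ball agree,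
    agree (mem_ball_self (shrinkingBump E j).rOut_pos)]

lemma tendsto_integral_mul_comp_mollify_smul {χ u : E → ℝ} (hχ : Continuous χ)
    (hχ_supp : HasCompactSupport χ) {G : ℝ → ℝ} {B : ℝ≥0} (hG : Continuous G)
    (hG_le : ∀ t, ‖G t‖ ≤ B) (hu : LocallyIntegrable u μ) (hf : LocallyIntegrable f μ) :
    Tendsto (fun j => ∫ x, (χ x * G (mollify μ (shrinkingBump E j) u x)) •
      mollify μ (shrinkingBump E j) f x ∂μ) atTop (𝓝 (∫ x, (χ x * G (u x)) • f x ∂μ)) := by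
  obtain ⟨M, hM⟩ := hχ_supp.exists_bound_of_continuous hχ
  have smooth_u (j : ℕ) := (contDiff_mollify (φ := shrinkingBump E j) hu).continuous
  have smooth_f (j : ℕ) := (contDiff_mollify (φ := shrinkingBump E j) hf).continuous
  have restrict_tsupport (a : E → ℝ) (g : E → F) :
      ∫ x, (χ x * a x) • g x ∂μ = ∫ x in tsupport χ, (χ x * a x) • g x ∂μ :=
    (setIntegral_eq_integral_of_forall_compl_eq_zero fun x hx => by
      rw [image_eq_zero_of_notMem_tsupport hx, zero_mul, zero_smul]).symm
  simp only [restrict_tsupport]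
  refine tendsto_integral_smul_of_tendsto_eLpNorm (M := M.toNNReal * B)
    (fun j => (hχ.mul (hG.comp (smooth_u j))).aestronglyMeasurable) (fun j x => ?_)
    (hχ.aestronglyMeasurable.mul (hG.comp_aestronglyMeasurable hu.aestronglyMeasurable.restrict))
    (ae_restrict_of_ae ((ae_tendsto_mollify hu).mono fun x hx =>
      ((hG.tendsto _).comp hx).const_mul (χ x)))
    (fun j => (smooth_f j).continuousOn.integrableOn_compact hχ_supp)
    (hf.integrableOn_isCompact hχ_supp) (tendsto_eLpNorm_one_mollify_sub_restrict hf hχ_supp)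
  rw [norm_mul, NNReal.coe_mul]
  gcongr
  exacts [(hM x).trans (Real.le_coe_toNNReal M), hG_le _]

end Convergence

end Mollification

section MuckenhouptWeights

variable {E : Type*} [NormedAddCommGroup E] [MeasurableSpace E] {μ : Measure E} {w : E → ℝ≥0∞}

/-- The Muckenhoupt `A₂` condition: the averages of `w` and of `1 / w` over a ball have uniformly
bounded product. -/
structure IsMuckenhouptA2 (μ : Measure E) (w : E → ℝ≥0∞) : Prop where
  measurable : Measurable w
  ne_zero : ∀ᵐ x ∂μ, w x ≠ 0
  ne_top : ∀ᵐ x ∂μ, w x ≠ ∞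
  mul_le : ∃ C : ℝ≥0, ∀ x r, 0 < r →
    (∫⁻ y in ball x r, w y ∂μ) * ∫⁻ y in ball x r, (w y)⁻¹ ∂μ ≤ C * μ (ball x r) ^ 2

namespace IsMuckenhouptA2

lemma inv (hw : IsMuckenhouptA2 μ w) : IsMuckenhouptA2 μ fun x => (w x)⁻¹ where
  measurable := hw.measurable.inv
  ne_zero := by simpa using hw.ne_top
  ne_top := by simpa using hw.ne_zero
  mul_le := by simpa only [inv_inv, mul_comm] using hw.mul_le

lemma absolutelyContinuous_withDensity (hw : IsMuckenhouptA2 μ w) : μ ≪ μ.withDensity w :=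
  withDensity_absolutelyContinuous' hw.measurable.aemeasurable hw.ne_zero

variable [NormedSpace ℝ E] [FiniteDimensional ℝ E] [μ.IsAddHaarMeasure]

lemma setLIntegral_ball_lt_top (hw : IsMuckenhouptA2 μ w) (x : E) (r : ℝ) :
    ∫⁻ y in ball x r, w y ∂μ < ∞ := by
  rcases le_or_gt r 0 with hr | hr
  · simp [ball_eq_empty.2 hr]
  obtain ⟨C, hC⟩ := hw.mul_le
  have inv_integral_ne_zero : ∫⁻ y in ball x r, (w y)⁻¹ ∂μ ≠ 0 := by
    rw [Ne, lintegral_eq_zero_iff (by exact hw.measurable.inv)]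
    intro h_zero
    have empty : ∀ᵐ _ ∂μ.restrict (ball x r), False := by
      filter_upwards [h_zero, ae_restrict_of_ae hw.ne_top] with y hy h_top
      exact h_top (ENNReal.inv_eq_zero.1 hy)
    have : μ.restrict (ball x r) = 0 := by simpa using empty
    exact (measure_ball_pos μ x hr).ne' (Measure.restrict_eq_zero.1 this)
  exact ENNReal.lt_top_of_mul_ne_top_left
    ((hC x r hr).trans_lt (by finiteness)).ne inv_integral_ne_zero

variable [BorelSpace E] {F : Type*} [NormedAddCommGroup F]

lemma isLocallyFiniteMeasure_withDensity (hw : IsMuckenhouptA2 μ w) :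
    IsLocallyFiniteMeasure (μ.withDensity w) :=
  ⟨fun x => ⟨ball x 1, ball_mem_nhds x one_pos, by
    simpa only [withDensity_apply _ measurableSet_ball] using hw.setLIntegral_ball_lt_top x 1⟩⟩

lemma locallyIntegrable_of_memLp (hw : IsMuckenhouptA2 μ w) {f : E → F}
    (hf : MemLp f 2 (μ.withDensity w)) : LocallyIntegrable f μ := by
  have hf_meas : AEStronglyMeasurable f μ := hf.1.mono_ac hw.absolutelyContinuous_withDensity
  refine fun x => ⟨ball x 1, ball_mem_nhds x one_pos, hf_meas.restrict, ?_⟩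
  have norm_lt_top : ∫⁻ y in ball x 1, ‖f y‖ₑ ^ 2 ∂(μ.withDensity w) < ∞ := by
    refine (setLIntegral_le_lintegral _ _).trans_lt ?_
    rw [← eLpNorm_two_sq]
    exact ENNReal.pow_lt_top hf.2
  have := (sq_lintegral_le_lintegral_inv_mul_withDensity hw.measurable hw.ne_zero hw.ne_top
    hf_meas.enorm measurableSet_ball).trans_lt
    (ENNReal.mul_lt_top (hw.inv.setLIntegral_ball_lt_top x 1) norm_lt_top)
  exact (ENNReal.pow_lt_top_iff.1 this).resolve_right two_ne_zero

end IsMuckenhouptA2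

variable [NormedSpace ℝ E] [FiniteDimensional ℝ E] [BorelSpace E]

lemma measurable_measure_ball (ν : Measure E) [SFinite ν] (r : ℝ) :
    Measurable fun x => ν (ball x r) :=
  measurable_measure_prodMk_left (s := {p : E × E | dist p.2 p.1 < r})
    (measurableSet_lt (by fun_prop) measurable_const)

namespace IsMuckenhouptA2

variable [μ.IsAddHaarMeasure] {F : Type*} [NormedAddCommGroup F] [NormedSpace ℝ F]

lemma sq_enorm_mollify_le (hw : IsMuckenhouptA2 μ w) {φ : ContDiffBump (0 : E)}
    (hφ : φ.rOut = 2 * φ.rIn) {f : E → F} (hf : AEStronglyMeasurable f μ) (x : E) :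
    ‖mollify μ φ f x‖ₑ ^ 2 ≤ (2 ^ finrank ℝ E * (μ (ball 0 φ.rOut))⁻¹) ^ 2 *
      ∫⁻ y in ball x φ.rOut,
        μ.withDensity (fun z => (w z)⁻¹) (ball y (2 * φ.rOut)) * ‖f y‖ₑ ^ 2
          ∂(μ.withDensity w) := by
  have average := enorm_mollify_le_average hφ f x (μ := μ)
  rw [μ.addHaar_ball_center] at average
  refine (pow_le_pow_left' average 2).trans ?_
  rw [mul_pow]
  gcongr
  refine (sq_lintegral_le_lintegral_inv_mul_withDensity hw.measurable hw.ne_zero hw.ne_top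
    hf.enorm measurableSet_ball).trans ?_
  rw [← withDensity_apply _ measurableSet_ball,
    ← lintegral_const_mul' _ _ (by
      rw [withDensity_apply _ measurableSet_ball]; exact (hw.inv.setLIntegral_ball_lt_top _ _).ne)]
  refine setLIntegral_mono' measurableSet_ball fun y hy => ?_
  gcongr
  rw [two_mul]
  exact ball_subset_ball' (add_le_add_right (mem_ball'.1 hy).le _)

lemma withDensity_ball_mul_inv_withDensity_ball_le (hw : IsMuckenhouptA2 μ w) :
    ∃ C : ℝ≥0, ∀ x r, 0 < r →
      μ.withDensity w (ball x r) * μ.withDensity (fun z => (w z)⁻¹) (ball x (2 * r)) ≤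
        C * μ (ball 0 r) ^ 2 := by
  obtain ⟨C, hC⟩ := hw.mul_le
  refine ⟨C * (2 ^ finrank ℝ E) ^ 2, fun x r hr => ?_⟩
  have double : μ (ball x (2 * r)) = 2 ^ finrank ℝ E * μ (ball 0 r) := by
    rw [μ.addHaar_ball_mul_of_pos _ two_pos, ENNReal.ofReal_pow zero_le_two, ENNReal.ofReal_ofNat]
  calc μ.withDensity w (ball x r) * μ.withDensity (fun z => (w z)⁻¹) (ball x (2 * r))
      ≤ μ.withDensity w (ball x (2 * r)) *
          μ.withDensity (fun z => (w z)⁻¹) (ball x (2 * r)) := by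
        gcongr
        linarith
    _ ≤ C * μ (ball x (2 * r)) ^ 2 := by
        simpa only [withDensity_apply _ measurableSet_ball] using hC x (2 * r) (by positivity)
    _ = _ := by rw [double]; push_cast; ring

lemma lintegral_sq_enorm_mollify_le (hw : IsMuckenhouptA2 μ w) :
    ∃ A : ℝ≥0, ∀ φ : ContDiffBump (0 : E), φ.rOut = 2 * φ.rIn →
      ∀ f : E → F, AEStronglyMeasurable f μ →
        ∫⁻ x, ‖mollify μ φ f x‖ₑ ^ 2 ∂(μ.withDensity w) ≤
          A * ∫⁻ x, ‖f x‖ₑ ^ 2 ∂(μ.withDensity w) := by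
  obtain ⟨C, hC⟩ := hw.withDensity_ball_mul_inv_withDensity_ball_le
  refine ⟨(2 ^ finrank ℝ E) ^ 2 * C, fun φ hφ f hf => ?_⟩
  set σ := μ.withDensity fun z => (w z)⁻¹
  set m := μ.withDensity w
  set V := μ (ball (0 : E) φ.rOut)
  set N : ℝ≥0∞ := 2 ^ finrank ℝ E
  have V_ne_zero : V ≠ 0 := (measure_ball_pos _ _ φ.rOut_pos).ne'
  have V_ne_top : V ≠ ∞ := measure_ball_lt_top.ne
  have integrand_meas : AEMeasurable (fun y => σ (ball y (2 * φ.rOut)) * ‖f y‖ₑ ^ 2) m :=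
    (measurable_measure_ball σ _).aemeasurable.mul
      ((hf.enorm.pow_const 2).mono_ac (withDensity_absolutelyContinuous _ _))
  calc ∫⁻ x, ‖mollify μ φ f x‖ₑ ^ 2 ∂m
      ≤ ∫⁻ x, (N * V⁻¹) ^ 2 *
          ∫⁻ y in ball x φ.rOut, σ (ball y (2 * φ.rOut)) * ‖f y‖ₑ ^ 2 ∂m ∂m :=
        lintegral_mono fun x => hw.sq_enorm_mollify_le hφ hf x
    _ = (N * V⁻¹) ^ 2 *
          ∫⁻ y, m (ball y φ.rOut) * (σ (ball y (2 * φ.rOut)) * ‖f y‖ₑ ^ 2) ∂m := by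
        rw [lintegral_const_mul' _ _ (by finiteness),
          lintegral_lintegral_ball_swap m m integrand_meas]
    _ ≤ (N * V⁻¹) ^ 2 * ∫⁻ y, C * V ^ 2 * ‖f y‖ₑ ^ 2 ∂m := by
        refine mul_le_mul' le_rfl (lintegral_mono fun y => ?_)
        rw [← mul_assoc]
        exact mul_le_mul' (hC y φ.rOut φ.rOut_pos) le_rfl
    _ = (V⁻¹ * V) ^ 2 * (N ^ 2 * C) * ∫⁻ y, ‖f y‖ₑ ^ 2 ∂m := by
        rw [lintegral_const_mul' _ _ (by finiteness)]; ring
    _ = _ := by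
        rw [ENNReal.inv_mul_cancel V_ne_zero V_ne_top]; simp [N]

lemma tendsto_eLpNorm_mollify_sub [CompleteSpace F] (hw : IsMuckenhouptA2 μ w) {f : E → F}
    (hf : MemLp f 2 (μ.withDensity w)) :
    Tendsto (fun j => eLpNorm (mollify μ (shrinkingBump E j) f - f) 2 (μ.withDensity w))
      atTop (𝓝 0) := by
  have := hw.isLocallyFiniteMeasure_withDensity
  obtain ⟨A, hA⟩ := hw.lintegral_sq_enorm_mollify_le (F := F)
  refine tendsto_eLpNorm_mollify_sub_of_bounded one_le_two ENNReal.ofNat_ne_top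
    (A := (A : ℝ≥0∞) ^ (1 / 2 : ℝ)) (by finiteness) (fun j h hh => ?_) hf
    (hw.locallyIntegrable_of_memLp hf)
  simp only [eLpNorm_two_eq_lintegral_sq]
  rw [← ENNReal.mul_rpow_of_nonneg _ _ (by norm_num)]
  gcongr
  exact hA _ (shrinkingBump_rOut_eq j) h (hh.1.mono_ac hw.absolutelyContinuous_withDensity)

end IsMuckenhouptA2

end MuckenhouptWeights

section Gradient

variable {E : Type*} [NormedAddCommGroup E] [InnerProductSpace ℝ E] [CompleteSpace E]
  {f g : E → ℝ} {x : E}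

lemma real_inner_gradient_right (f : E → ℝ) (x e : E) :
    inner ℝ e (gradient f x) = fderiv ℝ f x e := by
  rw [real_inner_comm, inner_gradient_left]

lemma norm_gradient_eq_norm_fderiv (f : E → ℝ) (x : E) : ‖gradient f x‖ = ‖fderiv ℝ f x‖ :=
  LinearIsometryEquiv.norm_map _ _

lemma continuous_gradient (hf : ContDiff ℝ 1 f) : Continuous (gradient f) :=
  (LinearIsometryEquiv.continuous _).comp (hf.continuous_fderiv one_ne_zero)

lemma hasCompactSupport_gradient (hf : HasCompactSupport f) : HasCompactSupport (gradient f) :=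
  (hf.fderiv ℝ).comp_left (g := (InnerProductSpace.toDual ℝ E).symm) (map_zero _)

lemma gradient_eq_zero_of_notMem_tsupport (hx : x ∉ tsupport f) : gradient f x = 0 := by
  rw [← norm_eq_zero, norm_gradient_eq_norm_fderiv, fderiv_of_notMem_tsupport ℝ hx, norm_zero]

lemma gradient_fun_mul (hf : DifferentiableAt ℝ f x) (hg : DifferentiableAt ℝ g x) :
    gradient (fun y => f y * g y) x = f x • gradient g x + g x • gradient f x := by
  refine ext_inner_left ℝ fun e => ?_
  simp [inner_add_right, inner_smul_right, fderiv_fun_mul hf hg]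

lemma gradient_fun_comp {G : ℝ → ℝ} (hf : DifferentiableAt ℝ f x)
    (hG : DifferentiableAt ℝ G (f x)) :
    gradient (fun y => G (f y)) x = deriv G (f x) • gradient f x := by
  refine ext_inner_left ℝ fun e => ?_
  have chain := (hG.hasDerivAt.comp_hasFDerivAt x hf.hasFDerivAt).fderiv
  simp only [Function.comp_def] at chain
  simp [inner_smul_right, chain]

lemma gradient_comp_const_sub (hf : Differentiable ℝ f) (x y : E) :
    gradient (fun z => f (x - z)) y = -gradient f (x - y) := by
  refine ext_inner_left ℝ fun e => ?_
  have chain := ((hf (x - y)).hasFDerivAt.comp y ((hasFDerivAt_id (𝕜 := ℝ) y).const_sub x)).fderiv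
  simp only [Function.comp_def] at chain
  simp [chain]

variable [FiniteDimensional ℝ E] [MeasurableSpace E] [BorelSpace E] {μ : Measure E}
  [μ.IsAddHaarMeasure]

lemma integral_smul_gradient_eq_neg (hg : ContDiff ℝ 1 g) (hf : ContDiff ℝ 1 f)
    (hf_supp : HasCompactSupport f) :
    ∫ x, g x • gradient f x ∂μ = -∫ x, f x • gradient g x ∂μ := by
  have int_left : Integrable (fun x => g x • gradient f x) μ :=
    (hg.continuous.smul (continuous_gradient hf)).integrable_of_hasCompactSupport
      (hasCompactSupport_gradient hf_supp).smul_left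
  have int_right : Integrable (fun x => f x • gradient g x) μ :=
    (hf.continuous.smul (continuous_gradient hg)).integrable_of_hasCompactSupport
      hf_supp.smul_right
  have int_mul : Integrable (fun x => g x * f x) μ :=
    (hg.continuous.mul hf.continuous).integrable_of_hasCompactSupport hf_supp.mul_left
  refine ext_inner_left ℝ fun e => ?_
  have int_left_e := int_left.const_inner (𝕜 := ℝ) e
  have int_right_e := int_right.const_inner (𝕜 := ℝ) e
  rw [inner_neg_right, ← integral_inner int_left, ← integral_inner int_right]
  simp only [inner_smul_right, real_inner_gradient_right] at int_left_e int_right_e ⊢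
  rw [integral_mul_fderiv_eq_neg_fderiv_mul_of_integrable
    (by simpa only [mul_comm] using int_right_e) int_left_e int_mul
    (fun x _ => (hg.differentiable one_ne_zero).differentiableAt)
    (fun x _ => (hf.differentiable one_ne_zero).differentiableAt)]
  simp only [mul_comm]

lemma gradient_mollify_apply {φ : ContDiffBump (0 : E)} {u : E → ℝ} (hu : LocallyIntegrable u μ)
    (x : E) :
    gradient (mollify μ φ u) x = -∫ y, u y • gradient (fun z => φ.normed μ (x - z)) y ∂μ := by
  have hρ : ContDiff ℝ 1 (φ.normed μ) := φ.contDiff_normed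
  have hρ_supp : HasCompactSupport (φ.normed μ) := φ.hasCompactSupport_normed
  have int_grad : Integrable (fun y => u y • gradient (fun z => φ.normed μ (x - z)) y) μ :=
    hu.integrable_smul_right_of_hasCompactSupport
      (continuous_gradient (hρ.comp (contDiff_const.sub contDiff_id)))
      (hasCompactSupport_gradient (hρ_supp.comp_homeomorph (Homeomorph.subLeft x)))
  have fderiv_eq := (hρ_supp.hasFDerivAt_convolution_left
    (ContinuousLinearMap.lsmul ℝ ℝ) hρ hu x).fderiv
  have int_fderiv := (hρ_supp.fderiv ℝ).convolutionExists_left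
    ((ContinuousLinearMap.lsmul ℝ ℝ : ℝ →L[ℝ] ℝ →L[ℝ] ℝ).precompL E)
    (hρ.continuous_fderiv one_ne_zero) hu x
  refine ext_inner_left ℝ fun e => ?_
  rw [real_inner_gradient_right, mollify, fderiv_eq, convolution_eq_swap,
    ContinuousLinearMap.integral_apply int_fderiv.integrable_swap, inner_neg_right,
    ← integral_inner int_grad, ← integral_neg]
  congr! 2
  rw [gradient_comp_const_sub (hρ.differentiable one_ne_zero), inner_smul_right, inner_neg_right,
    real_inner_gradient_right]
  simp [ContinuousLinearMap.precompL_apply, mul_comm]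

end Gradient

section DistributionalGradient

variable {n : ℕ} {u b : Euc n → ℝ} {v V : Euc n → Euc n} {E : Set (Euc n)}

lemma setIntegral_smul_gradient_eq_integral {φ : Euc n → ℝ} (hφ : tsupport φ ⊆ E) :
    ∫ x in E, u x • gradient φ x = ∫ x, u x • gradient φ x :=
  setIntegral_eq_integral_of_forall_compl_eq_zero fun x hx => by
    rw [gradient_eq_zero_of_notMem_tsupport fun h => hx (hφ h), smul_zero]

lemma setIntegral_smul_eq_integral_of_tsupport_subset {φ : Euc n → ℝ} (hφ : tsupport φ ⊆ E) :
    ∫ x in E, φ x • v x = ∫ x, φ x • v x :=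
  setIntegral_eq_integral_of_forall_compl_eq_zero fun x hx => by
    rw [image_eq_zero_of_notMem_tsupport fun h => hx (hφ h), zero_smul]

lemma isDistribGradOn_iff :
    IsDistribGradOn u v E ↔ ∀ φ : Euc n → ℝ, ContDiff ℝ (⊤ : ℕ∞) φ → HasCompactSupport φ →
      tsupport φ ⊆ E → ∫ x, u x • gradient φ x = -∫ x, φ x • v x := by
  refine forall₄_congr fun φ _ _ hφ => ?_
  rw [setIntegral_smul_gradient_eq_integral hφ,
    setIntegral_smul_eq_integral_of_tsupport_subset hφ]

namespace IsDistribGradOn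

lemma mono_congr (h : IsDistribGradOn u v E) {E' : Set (Euc n)} (hE : E' ⊆ E)
    (hE_meas : MeasurableSet E') (hb : EqOn b u E') (hV : EqOn V v E') :
    IsDistribGradOn b V E' := by
  intro φ hφ hφ_supp hφE'
  have congr_left : ∫ x in E', b x • gradient φ x = ∫ x in E', u x • gradient φ x :=
    setIntegral_congr_fun hE_meas fun x hx => by simp only [hb hx]
  have congr_right : ∫ x in E', φ x • V x = ∫ x in E', φ x • v x :=
    setIntegral_congr_fun hE_meas fun x hx => by simp only [hV hx]
  rw [congr_left, congr_right, setIntegral_smul_gradient_eq_integral hφE',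
    setIntegral_smul_eq_integral_of_tsupport_subset hφE']
  exact isDistribGradOn_iff.1 h φ hφ hφ_supp (hφE'.trans hE)

lemma gradient_mollify_apply (h : IsDistribGradOn u v E) (hu : LocallyIntegrable u)
    {φ : ContDiffBump (0 : Euc n)} {x : Euc n} (hx : closedBall x φ.rOut ⊆ E) :
    gradient (mollify volume φ u) x = mollify volume φ v x := by
  have kernel_supp : tsupport (fun y => φ.normed volume (x - y)) ⊆ closedBall x φ.rOut := by
    refine closure_minimal (fun y hy => ?_) isClosed_closedBall
    have : x - y ∈ Function.support (φ.normed volume) := hy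
    rw [φ.support_normed_eq, mem_ball_zero_iff, ← dist_eq_norm] at this
    exact mem_closedBall'.2 this.le
  rw [_root_.gradient_mollify_apply hu, isDistribGradOn_iff.1 h
    (fun y => φ.normed volume (x - y)) (φ.contDiff_normed.comp (contDiff_const.sub contDiff_id))
    (φ.hasCompactSupport_normed.comp_homeomorph (Homeomorph.subLeft x))
    (kernel_supp.trans hx), neg_neg, mollify_apply]

lemma integral_product_rule (h : IsDistribGradOn b V E) (hb : LocallyIntegrable b)
    {η φ : Euc n → ℝ} (hη : ContDiff ℝ (⊤ : ℕ∞) η) (hφ : ContDiff ℝ (⊤ : ℕ∞) φ)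
    (hφ_supp : HasCompactSupport φ) (hE : tsupport (fun x => φ x * η x) ⊆ E) :
    (∫ x, η x • b x • gradient φ x) + ∫ x, (φ x * b x) • gradient η x =
      -∫ x, η x • φ x • V x := by
  have hη₁ : ContDiff ℝ 1 η := hη.of_le (by exact_mod_cast le_top)
  have hφ₁ : ContDiff ℝ 1 φ := hφ.of_le (by exact_mod_cast le_top)
  have int_η : Integrable fun x => b x • (η x • gradient φ x) :=
    hb.integrable_smul_right_of_hasCompactSupport
      (hη.continuous.smul (continuous_gradient hφ₁))
      ((hasCompactSupport_gradient hφ_supp).smul_left (f := η))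
  have int_φ : Integrable fun x => b x • (φ x • gradient η x) :=
    hb.integrable_smul_right_of_hasCompactSupport
      (hφ.continuous.smul (continuous_gradient hη₁)) (hφ_supp.smul_right (f' := gradient η))
  have test := isDistribGradOn_iff.1 h (fun x => φ x * η x) (hφ.mul hη) hφ_supp.mul_right hE
  have product_rule (x : Euc n) : gradient (fun x => φ x * η x) x
      = φ x • gradient η x + η x • gradient φ x :=
    gradient_fun_mul (hφ₁.differentiable one_ne_zero x) (hη₁.differentiable one_ne_zero x)
  simp only [product_rule, smul_add] at test
  rw [integral_add int_φ int_η, add_comm] at test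
  simpa only [smul_smul, mul_comm (b _), mul_comm (φ _) (η _)] using test

lemma smooth_mul (h : IsDistribGradOn b V E) (hb : LocallyIntegrable b)
    (hV : LocallyIntegrable V) {η : Euc n → ℝ} (hη : ContDiff ℝ (⊤ : ℕ∞) η) :
    IsDistribGradOn (fun x => η x * b x) (fun x => η x • V x + b x • gradient η x) E := by
  refine isDistribGradOn_iff.2 fun φ hφ hφ_supp hφE => ?_
  have int_V : Integrable fun x => (φ x * η x) • V x :=
    hV.integrable_smul_left_of_hasCompactSupport (hφ.continuous.mul hη.continuous)
      hφ_supp.mul_right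
  have int_b : Integrable fun x => b x • (φ x • gradient η x) :=
    hb.integrable_smul_right_of_hasCompactSupport
      (hφ.continuous.smul (continuous_gradient (hη.of_le (by exact_mod_cast le_top))))
      (hφ_supp.smul_right (f' := gradient η))
  have product := h.integral_product_rule hb hη hφ hφ_supp
    ((tsupport_mul_subset_left (f := φ)).trans hφE)
  simp only [smul_smul] at product int_b
  simp only [smul_add, smul_smul]
  rw [integral_add int_V (by simpa only [mul_comm (b _)] using int_b), neg_add,
    ← sub_eq_add_neg, eq_sub_iff_add_eq, product]
  simp only [mul_comm (η _)]

lemma integral_comp_mollify_smul_gradient (h : IsDistribGradOn u v E) (hu : LocallyIntegrable u)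
    {F : ℝ → ℝ} (hF : ContDiff ℝ 1 F) {φ : Euc n → ℝ} (hφ : ContDiff ℝ 1 φ)
    (hφ_supp : HasCompactSupport φ) {ρ : ContDiffBump (0 : Euc n)}
    (hρ : cthickening ρ.rOut (tsupport φ) ⊆ E) :
    ∫ x, F (mollify volume ρ u x) • gradient φ x =
      -∫ x, (φ x * deriv F (mollify volume ρ u x)) • mollify volume ρ v x := by
  have hu_smooth : ContDiff ℝ 1 (mollify volume ρ u) :=
    (contDiff_mollify hu).of_le (by exact_mod_cast le_top)
  rw [integral_smul_gradient_eq_neg (g := fun x => F (mollify volume ρ u x))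
    (hF.comp hu_smooth) hφ hφ_supp]
  refine congrArg Neg.neg (integral_congr_ae (ae_of_all _ fun x => ?_))
  beta_reduce
  by_cases hx : x ∈ tsupport φ
  · rw [gradient_fun_comp (hu_smooth.differentiable one_ne_zero x)
      (hF.differentiable one_ne_zero _), h.gradient_mollify_apply hu
        ((closedBall_subset_cthickening hx _).trans hρ), mul_smul]
  · rw [image_eq_zero_of_notMem_tsupport hx, zero_mul, zero_smul, zero_smul]

lemma comp_of_bounded (h : IsDistribGradOn u v E) (hE : IsOpen E) (hu : LocallyIntegrable u)
    (hv : LocallyIntegrable v) {F : ℝ → ℝ} {B B' : ℝ≥0} (hF : ContDiff ℝ 1 F)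
    (hF_le : ∀ t, ‖F t‖ ≤ B) (hF'_le : ∀ t, ‖deriv F t‖ ≤ B') :
    IsDistribGradOn (fun x => F (u x)) (fun x => deriv F (u x) • v x) E := by
  rw [isDistribGradOn_iff]
  intro φ hφ hφ_supp hφE
  have hφ₁ : ContDiff ℝ 1 φ := hφ.of_le (by exact_mod_cast le_top)
  have smooth_u (j : ℕ) := (contDiff_mollify (φ := shrinkingBump (Euc n) j) hu).continuous
  have int_grad : Integrable (gradient φ) :=
    (continuous_gradient hφ₁).integrable_of_hasCompactSupport (hasCompactSupport_gradient hφ_supp)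
  have left_lim := tendsto_integral_smul_of_tendsto_eLpNorm (f := fun _ => gradient φ)
    (a := fun j x => F (mollify volume (shrinkingBump (Euc n) j) u x))
    (fun j => (hF.continuous.comp (smooth_u j)).aestronglyMeasurable) (fun j x => hF_le _)
    (hF.continuous.comp_aestronglyMeasurable hu.aestronglyMeasurable)
    ((ae_tendsto_mollify hu).mono fun x hx => (hF.continuous.tendsto _).comp hx)
    (fun _ => int_grad) int_grad (by simp)
  have right_lim := tendsto_integral_mul_comp_mollify_smul hφ.continuous hφ_supp
    (hF.continuous_deriv le_rfl) hF'_le hu hv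
  obtain ⟨e, he, hφ_thick⟩ := IsCompact.exists_cthickening_subset_open hφ_supp hE hφE
  have identity : ∀ᶠ j in atTop,
      ∫ x, F (mollify volume (shrinkingBump (Euc n) j) u x) • gradient φ x =
        -∫ x, (φ x * deriv F (mollify volume (shrinkingBump (Euc n) j) u x)) •
          mollify volume (shrinkingBump (Euc n) j) v x := by
    filter_upwards [(tendsto_shrinkingBump_rOut (E := Euc n)).eventually (gt_mem_nhds he)] with j hj
    exact h.integral_comp_mollify_smul_gradient hu hF hφ₁ hφ_supp
      ((cthickening_mono hj.le _).trans hφ_thick)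
  simpa only [mul_smul] using tendsto_nhds_unique (left_lim.congr' identity) right_lim.neg

end IsDistribGradOn

end DistributionalGradient

section CutoffNearSet

lemma mem_thickening_of_dist_lt {X : Type*} [PseudoMetricSpace X] {A : Set X} {x y : X}
    {r s t : ℝ} (hy : y ∈ thickening s A) (hxy : dist x y < r) (hrs : r + s ≤ t) :
    x ∈ thickening t A :=
  thickening_mono hrs A (thickening_thickening_subset r s A (mem_thickening_iff.2 ⟨y, hy, hxy⟩))

variable {E : Type*} [NormedAddCommGroup E] [InnerProductSpace ℝ E] [FiniteDimensional ℝ E]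

lemma exists_smooth_cutoff_vanishing_near (A : Set E) {r : ℝ} (hr : 0 < r) :
    ∃ η : E → ℝ, ContDiff ℝ (⊤ : ℕ∞) η ∧ (∀ x, ‖η x‖ ≤ 1) ∧
      (∀ x ∈ thickening r A, η x = 0) ∧
      (∀ x ∉ thickening (4 * r) A, η =ᶠ[𝓝 x] fun _ => 1) ∧
      ∀ x, ‖gradient η x‖ ≤ r⁻¹ := by
  borelize E
  let φ : ContDiffBump (0 : E) := ⟨r / 4, r / 2, by positivity, by linarith⟩
  let f : E → ℝ := fun x => thickenedIndicator hr (thickening (3 * r) A)ᶜ x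
  have f_lipschitz : LipschitzWith r.toNNReal⁻¹ f := lipschitzWith_thickenedIndicator hr _
  refine ⟨mollify volume φ f, contDiff_mollify f_lipschitz.continuous.locallyIntegrable,
    norm_mollify_le fun x => ?_, fun x hx => ?_, fun x hx => ?_, fun x => ?_⟩
  · simpa [f] using thickenedIndicator_le_one hr _ x
  · have f_zero : EqOn f (fun _ => 0) (ball x φ.rOut) := fun y hy => by
      refine NNReal.coe_eq_zero.2 (thickenedIndicator_zero hr _ fun hy_far => ?_)
      obtain ⟨z, hz, hyz⟩ := mem_thickening_iff.1 hy_far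
      have y_near : y ∈ thickening (3 / 2 * r) A :=
        mem_thickening_of_dist_lt hx (mem_ball.1 hy) (by simp only [φ]; linarith)
      exact hz (mem_thickening_of_dist_lt y_near (dist_comm y z ▸ hyz) (by linarith))
    rw [mollify_congr_of_eqOn_ball f_zero, mollify_const]
  · filter_upwards [ball_mem_nhds x φ.rOut_pos] with y hy
    have f_one : EqOn f (fun _ => 1) (ball y φ.rOut) := fun z hz => by
      refine NNReal.coe_eq_one.2 (thickenedIndicator_one hr _ fun z_near => hx ?_)
      have y_near : y ∈ thickening (7 / 2 * r) A :=
        mem_thickening_of_dist_lt z_near (mem_ball'.1 hz) (by simp only [φ]; linarith)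
      exact mem_thickening_of_dist_lt y_near (mem_ball'.1 hy) (by simp only [φ]; linarith)
    rw [mollify_congr_of_eqOn_ball f_one, mollify_const]
  · rw [norm_gradient_eq_norm_fderiv]
    simpa [hr.le] using norm_fderiv_le_of_lipschitz ℝ (lipschitzWith_mollify f_lipschitz)

lemma exists_seq_smooth_cutoff_vanishing_near {A : Set E} (hA : IsClosed A) :
    ∃ (ε : ℕ → ℝ) (η : ℕ → E → ℝ), (∀ j, 0 < ε j) ∧ Tendsto ε atTop (𝓝 0) ∧
      (∀ j, ContDiff ℝ (⊤ : ℕ∞) (η j)) ∧ (∀ j x, ‖η j x‖ ≤ 1) ∧ (∀ j, tsupport (η j) ⊆ Aᶜ) ∧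
      (∀ x ∉ A, Tendsto (η · x) atTop (𝓝 1)) ∧
      (∀ j, ∀ x ∉ thickening (ε j) A, gradient (η j) x = 0) ∧
      ∀ j x, ‖gradient (η j) x‖ ≤ 4 / ε j := by
  have radius_pos (j : ℕ) : (0 : ℝ) < 1 / (j + 1) := by positivity
  choose η η_smooth η_le η_near η_far gradient_le using
    fun j : ℕ => exists_smooth_cutoff_vanishing_near A (radius_pos j)
  have ε_lim : Tendsto (fun j : ℕ => 4 * (1 / ((j : ℝ) + 1))) atTop (𝓝 0) := by
    simpa using tendsto_one_div_add_atTop_nhds_zero_nat.const_mul (4 : ℝ)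
  refine ⟨fun j => 4 * (1 / (j + 1)), η, fun j => by positivity, ε_lim, η_smooth, η_le,
    fun j x hx hxA => ?_, fun x hx => ?_, fun j x hx => ?_, fun j x => ?_⟩
  · refine notMem_tsupport_iff_eventuallyEq.2 ?_ hx
    filter_upwards [isOpen_thickening.mem_nhds (self_subset_thickening (radius_pos j) A hxA)]
      with y hy using η_near j y hy
  · obtain ⟨r, r_pos, hr⟩ := Metric.isOpen_iff.1 hA.isOpen_compl x hx
    refine tendsto_const_nhds.congr' ?_
    filter_upwards [ε_lim.eventually_lt_const r_pos] with j hj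
    refine (η_far j x fun x_near => ?_).self_of_nhds.symm
    obtain ⟨y, hy, hxy⟩ := mem_thickening_iff.1 x_near
    exact hr (mem_ball'.2 (hxy.trans hj)) hy
  · rw [gradient, (η_far j x hx).fderiv_eq, fderiv_fun_const]
    simp
  · convert gradient_le j x using 1
    field_simp

end CutoffNearSet

section Removability

/-- The Minkowski content of codimension one of `Γ` vanishes locally: the `ε`-neighbourhood of
`Γ` has measure `o(ε)` in every ball. This makes `Γ` removable for bounded Sobolev functions. -/
def HasNullMinkowskiContent {E : Type*} [NormedAddCommGroup E] [MeasurableSpace E] (μ : Measure E)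
    (Γ : Set E) : Prop :=
  ∀ R : ℝ, Tendsto (fun ε => μ (ball 0 R ∩ thickening ε Γ) / ENNReal.ofReal ε) (𝓝[>] 0) (𝓝 0)

lemma HasNullMinkowskiContent.measure_eq_zero {E : Type*} [NormedAddCommGroup E]
    [MeasurableSpace E] {μ : Measure E} {Γ : Set E} (hΓ : HasNullMinkowskiContent μ Γ) :
    μ Γ = 0 := by
  have ball_null (R : ℕ) : μ (ball 0 R ∩ Γ) = 0 := by
    have ofReal_lim : Tendsto ENNReal.ofReal (𝓝[>] 0) (𝓝 0) :=
      (ENNReal.ofReal_zero ▸ ENNReal.continuous_ofReal.tendsto 0).mono_left nhdsWithin_le_nhds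
    refine nonpos_iff_eq_zero.1 (ge_of_tendsto
      (by simpa using ENNReal.Tendsto.mul (hΓ R) (by simp) ofReal_lim (by simp)) ?_)
    filter_upwards [self_mem_nhdsWithin] with ε hε
    rw [ENNReal.div_mul_cancel (ENNReal.ofReal_pos.2 hε).ne' ENNReal.ofReal_ne_top]
    gcongr
    exact self_subset_thickening hε Γ
  refine measure_mono_null (fun x hx => ?_) (measure_iUnion_null ball_null)
  obtain ⟨R, hR⟩ := exists_nat_gt ‖x‖
  exact mem_iUnion.2 ⟨R, mem_ball_zero_iff.2 hR, hx⟩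

lemma HasNullMinkowskiContent.tendsto_integral_smul_gradient {E : Type*} [NormedAddCommGroup E]
    [InnerProductSpace ℝ E] [CompleteSpace E] [MeasurableSpace E] [OpensMeasurableSpace E]
    {μ : Measure E} {Γ : Set E} (hΓ : HasNullMinkowskiContent μ Γ) {g : E → ℝ} {M : ℝ≥0} {R : ℝ}
    (hg_le : ∀ x, ‖g x‖ ≤ M) (hg_supp : ∀ x ∉ ball 0 R, g x = 0) {ε : ℕ → ℝ} (hε : ∀ j, 0 < ε j)
    (hε_lim : Tendsto ε atTop (𝓝 0)) {η : ℕ → E → ℝ} {C : ℝ≥0}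
    (hη : ∀ j, ∀ x ∉ thickening (ε j) Γ, gradient (η j) x = 0)
    (hη_le : ∀ j x, ‖gradient (η j) x‖ ≤ C / ε j) :
    Tendsto (fun j => ∫ x, g x • gradient (η j) x ∂μ) atTop (𝓝 0) := by
  have content_lim := (hΓ R).comp
    (tendsto_nhdsWithin_iff.2 ⟨hε_lim, Eventually.of_forall hε⟩)
  have bound_lim := ENNReal.Tendsto.const_mul content_lim (.inr (ENNReal.coe_ne_top (r := M * C)))
  rw [mul_zero] at bound_lim
  refine tendsto_zero_iff_enorm_tendsto_zero.2 (tendsto_of_tendsto_of_tendsto_of_le_of_le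
    tendsto_const_nhds bound_lim (fun _ => zero_le) fun j => ?_)
  have strip_meas : MeasurableSet (ball 0 R ∩ thickening (ε j) Γ) :=
    measurableSet_ball.inter isOpen_thickening.measurableSet
  calc ‖∫ x, g x • gradient (η j) x ∂μ‖ₑ
      ≤ ∫⁻ x, ‖g x • gradient (η j) x‖ₑ ∂μ := enorm_integral_le_lintegral_enorm _
    _ ≤ ∫⁻ x, (ball 0 R ∩ thickening (ε j) Γ).indicator
          (fun _ => ENNReal.ofReal (M * (C / ε j))) x ∂μ := lintegral_mono fun x => by
        by_cases hx : x ∈ ball 0 R ∩ thickening (ε j) Γ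
        · rw [indicator_of_mem hx, ← ofReal_norm, norm_smul]
          have := hg_le x
          have := hη_le j x
          gcongr
        · rcases not_and_or.1 hx with hx | hx
          · simp [hg_supp x hx]
          · simp [hη j x hx]
    _ = (M * C : ℝ≥0) * (μ (ball 0 R ∩ thickening (ε j) Γ) / ENNReal.ofReal (ε j)) := by
        rw [lintegral_indicator strip_meas, setLIntegral_const, ENNReal.ofReal_mul M.coe_nonneg,
          ENNReal.ofReal_div_of_pos (hε j)]
        simp only [ENNReal.ofReal_coe_nnreal, ENNReal.coe_mul, div_eq_mul_inv]
        ring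

variable {n : ℕ} {b : Euc n → ℝ} {V : Euc n → Euc n} {Γ : Set (Euc n)}

lemma IsDistribGradOn.univ_of_compl (h : IsDistribGradOn b V Γᶜ) (hΓ_closed : IsClosed Γ)
    (hΓ : HasNullMinkowskiContent volume Γ) (hb : AEStronglyMeasurable b) {B : ℝ≥0}
    (hb_le : ∀ x, ‖b x‖ ≤ B) (hV : LocallyIntegrable V) :
    IsDistribGradOn b V univ := by
  have b_locInt : LocallyIntegrable b :=
    (locallyIntegrable_const (B : ℝ)).mono hb (.of_forall fun x => by simpa using hb_le x)
  refine isDistribGradOn_iff.2 fun φ φ_smooth φ_supp _ => ?_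
  have φ_cont := φ_smooth.continuous
  have gradient_cont := continuous_gradient (φ_smooth.of_le (by exact_mod_cast le_top))
  obtain ⟨ε, η, ε_pos, ε_lim, η_smooth, η_le, η_supp, η_lim, η_gradient_zero, η_gradient_le⟩ :=
    exists_seq_smooth_cutoff_vanishing_near hΓ_closed
  have cutoff_lim {f : Euc n → Euc n} (hf : Integrable f) :
      Tendsto (fun j => ∫ x, η j x • f x) atTop (𝓝 (∫ x, f x)) := by
    have η_lim_ae : ∀ᵐ x, Tendsto (η · x) atTop (𝓝 1) := by
      filter_upwards [measure_eq_zero_iff_ae_notMem.1 hΓ.measure_eq_zero] with x hx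
        using η_lim x hx
    simpa using tendsto_integral_smul_of_tendsto_eLpNorm (M := 1)
      (fun j => (η_smooth j).continuous.aestronglyMeasurable) (by simpa using η_le)
      aestronglyMeasurable_const η_lim_ae (fun _ => hf) hf (by simp)
  have left_integrable : Integrable fun x => b x • gradient φ x :=
    b_locInt.integrable_smul_right_of_hasCompactSupport gradient_cont
      (hasCompactSupport_gradient φ_supp)
  have right_integrable : Integrable fun x => φ x • V x :=
    hV.integrable_smul_left_of_hasCompactSupport φ_cont φ_supp
  obtain ⟨R, φ_zero⟩ : ∃ R : ℝ, ∀ x ∉ ball 0 R, φ x = 0 := by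
    obtain ⟨R, hR⟩ := φ_supp.isBounded.subset_ball 0
    exact ⟨R, fun x hx => image_eq_zero_of_notMem_tsupport fun h => hx (hR h)⟩
  obtain ⟨M, φ_le⟩ := φ_supp.exists_bound_of_continuous φ_cont
  have gradient_term_lim : Tendsto (fun j => ∫ x, (φ x * b x) • gradient (η j) x) atTop (𝓝 0) :=
    hΓ.tendsto_integral_smul_gradient (M := M.toNNReal * B) (C := 4) (R := R)
      (fun x => by
        rw [norm_mul]
        push_cast
        gcongr
        exacts [(φ_le x).trans (Real.le_coe_toNNReal M), hb_le x])
      (fun x hx => by simp [φ_zero x hx]) ε_pos ε_lim η_gradient_zero η_gradient_le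
  have product_rule (j : ℕ) := h.integral_product_rule b_locInt (η_smooth j) φ_smooth φ_supp
    ((tsupport_mul_subset_right (f := φ)).trans (η_supp j))
  refine tendsto_nhds_unique
    (by simpa using (cutoff_lim left_integrable).add gradient_term_lim) ?_
  simpa only [product_rule] using (cutoff_lim right_integrable).neg

end Removability

section LogarithmicCutoff

lemma norm_inv_smul {F : Type*} [SeminormedAddCommGroup F] [NormedSpace ℝ F] {r : ℝ} (hr : 0 < r)
    (x : F) : ‖r⁻¹ • x‖ = ‖x‖ / r := by
  rw [norm_smul, norm_inv, Real.norm_of_nonneg hr.le, inv_mul_eq_div]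

lemma enorm_sum_sq_le_of_subsingleton_support {ι E : Type*} [NormedAddCommGroup E]
    {s : Finset ι} {g : ι → E} (hg : (Function.support g).Subsingleton) :
    ‖∑ i ∈ s, g i‖ₑ ^ 2 ≤ ∑ i ∈ s, ‖g i‖ₑ ^ 2 := by
  by_cases hs : ∃ i ∈ s, g i ≠ 0
  · obtain ⟨i, hi, gi_ne⟩ := hs
    have sum_eq : ∑ j ∈ s, g j = g i := Finset.sum_eq_single_of_mem i hi fun j _ hji =>
      by_contra fun gj_ne => hji (hg gj_ne gi_ne)
    rw [sum_eq]
    exact Finset.single_le_sum (f := fun i => ‖g i‖ₑ ^ 2) (fun _ _ => zero_le) hi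
  · push Not at hs
    simp [Finset.sum_eq_zero hs]

variable {E : Type*} [NormedAddCommGroup E] [InnerProductSpace ℝ E] [FiniteDimensional ℝ E]

variable (E) in
/-- A smooth radial cutoff at scale `r`: it equals `1` on the ball of radius `r` and vanishes off
the ball of radius `2 r`, as a dilate of one fixed bump. -/
def radialCutoff (r : ℝ) (x : E) : ℝ :=
  (⟨1, 2, one_pos, one_lt_two⟩ : ContDiffBump (0 : E)) (r⁻¹ • x)

variable {r : ℝ} {x : E}

lemma contDiff_radialCutoff (r : ℝ) : ContDiff ℝ (⊤ : ℕ∞) (radialCutoff E r) :=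
  (ContDiffBump.contDiff _).comp (contDiff_const_smul _)

lemma radialCutoff_nonneg (r : ℝ) (x : E) : 0 ≤ radialCutoff E r x :=
  ContDiffBump.nonneg _

lemma radialCutoff_le_one (r : ℝ) (x : E) : radialCutoff E r x ≤ 1 :=
  ContDiffBump.le_one _

lemma radialCutoff_eq_one (hr : 0 < r) (hx : ‖x‖ ≤ r) : radialCutoff E r x = 1 := by
  refine ContDiffBump.one_of_mem_closedBall _ (mem_closedBall_zero_iff.2 ?_)
  rwa [norm_inv_smul hr, div_le_one hr]

lemma radialCutoff_eq_zero (hr : 0 < r) (hx : 2 * r ≤ ‖x‖) : radialCutoff E r x = 0 := by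
  refine ContDiffBump.zero_of_le_dist _ ?_
  rwa [dist_zero_right, norm_inv_smul hr, le_div_iff₀ hr]

lemma gradient_radialCutoff_eq_zero (hr : 0 < r) (hx : ‖x‖ < r ∨ 2 * r < ‖x‖) :
    gradient (radialCutoff E r) x = 0 := by
  have locally_const : ∃ c : ℝ, radialCutoff E r =ᶠ[𝓝 x] fun _ => c := by
    rcases hx with hx | hx
    · refine ⟨1, ?_⟩
      filter_upwards [continuous_norm.continuousAt.eventually_lt_const hx] with y hy
        using radialCutoff_eq_one hr hy.le
    · refine ⟨0, ?_⟩
      filter_upwards [continuous_norm.continuousAt.eventually_const_lt hx] with y hy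
        using radialCutoff_eq_zero hr hy.le
  obtain ⟨c, hc⟩ := locally_const
  rw [gradient, hc.fderiv_eq, fderiv_fun_const]
  simp

variable (E) in
lemma exists_norm_gradient_radialCutoff_le :
    ∃ M : ℝ≥0, ∀ r > 0, ∀ x, ‖gradient (radialCutoff E r) x‖ ≤ M / r := by
  let φ : ContDiffBump (0 : E) := ⟨1, 2, one_pos, one_lt_two⟩
  obtain ⟨M, hM⟩ := (φ.hasCompactSupport.fderiv ℝ).exists_bound_of_continuous
    (φ.contDiff.continuous_fderiv one_ne_zero)
  refine ⟨M.toNNReal, fun r hr x => ?_⟩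
  rw [norm_gradient_eq_norm_fderiv, show radialCutoff E r = fun x => φ (r⁻¹ • x) from rfl,
    fderiv_comp_smul, norm_smul, norm_inv, Real.norm_of_nonneg hr.le, inv_mul_eq_div]
  gcongr
  exact (hM _).trans (Real.le_coe_toNNReal M)

variable (E) in
/-- The average of the radial cutoffs at the scales `R, 4 R, …, 4 ^ (N - 1) * R`, a smooth stand-in
for the logarithmic cutoff `1 - log (‖x‖ / R) / (N log 4)` on `R ≤ ‖x‖ ≤ 4 ^ N * R`. -/
def logCutoff (R : ℝ) (N : ℕ) (x : E) : ℝ :=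
  (N : ℝ)⁻¹ • ∑ j ∈ Finset.range N, radialCutoff E (4 ^ j * R) x

variable {R : ℝ} {N : ℕ}

lemma contDiff_logCutoff (R : ℝ) (N : ℕ) : ContDiff ℝ (⊤ : ℕ∞) (logCutoff E R N) :=
  (ContDiff.sum fun _ _ => contDiff_radialCutoff _).const_smul _

lemma norm_logCutoff_le_one (R : ℝ) (N : ℕ) (x : E) : ‖logCutoff E R N x‖ ≤ 1 := by
  have sum_le : ‖∑ j ∈ Finset.range N, radialCutoff E (4 ^ j * R) x‖ ≤ N := by
    rw [Real.norm_of_nonneg (Finset.sum_nonneg fun _ _ => radialCutoff_nonneg _ _)]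
    simpa using Finset.sum_le_card_nsmul (Finset.range N) _ 1 fun j _ =>
      radialCutoff_le_one (4 ^ j * R) x
  rw [logCutoff, norm_smul, norm_inv, Real.norm_natCast, inv_mul_eq_div]
  exact div_le_one_of_le₀ sum_le N.cast_nonneg

lemma logCutoff_eq_one (hR : 0 < R) (hN : N ≠ 0) (hx : ‖x‖ ≤ R) : logCutoff E R N x = 1 := by
  have radial_one (j : ℕ) : radialCutoff E (4 ^ j * R) x = 1 :=
    radialCutoff_eq_one (by positivity)
      (hx.trans (le_mul_of_one_le_left hR.le (one_le_pow₀ (by norm_num))))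
  simp [logCutoff, radial_one, hN]

lemma hasCompactSupport_logCutoff (hR : 0 < R) (N : ℕ) : HasCompactSupport (logCutoff E R N) := by
  refine HasCompactSupport.intro (isCompact_closedBall 0 (2 * (4 ^ N * R))) fun x hx => ?_
  rw [mem_closedBall_zero_iff, not_le] at hx
  refine smul_eq_zero_of_right _ (Finset.sum_eq_zero fun j hj => ?_)
  refine radialCutoff_eq_zero (by positivity) (le_trans ?_ hx.le)
  gcongr
  exacts [by norm_num, (Finset.mem_range.1 hj).le]

lemma subsingleton_support_gradient_radialCutoff (hR : 0 < R) (x : E) :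
    (Function.support fun j : ℕ => gradient (radialCutoff E (4 ^ j * R)) x).Subsingleton := by
  have annulus {j : ℕ} (hj : gradient (radialCutoff E (4 ^ j * R)) x ≠ 0) :
      4 ^ j * R ≤ ‖x‖ ∧ ‖x‖ ≤ 2 * (4 ^ j * R) := by
    contrapose! hj
    exact gradient_radialCutoff_eq_zero (by positivity) (or_iff_not_imp_left.2 (hj <| not_lt.1 ·))
  have not_lt_of_ne_zero {i j : ℕ} (hi : gradient (radialCutoff E (4 ^ i * R)) x ≠ 0)
      (hj : gradient (radialCutoff E (4 ^ j * R)) x ≠ 0) : ¬ i < j := fun hij => by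
    have pow_le : (4 : ℝ) ^ (i + 1) ≤ 4 ^ j := pow_le_pow_right₀ (by norm_num) hij
    have : 4 * (4 ^ i * R) ≤ 4 ^ j * R := by
      rw [← mul_assoc, ← pow_succ']
      gcongr
    have : 0 < 4 ^ i * R := by positivity
    linarith [annulus hi, annulus hj]
  exact fun i hi j hj => le_antisymm (not_lt.1 (not_lt_of_ne_zero hj hi))
    (not_lt.1 (not_lt_of_ne_zero hi hj))

lemma enorm_gradient_logCutoff_sq_le (hR : 0 < R) (N : ℕ) (x : E) :
    ‖gradient (logCutoff E R N) x‖ₑ ^ 2 ≤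
      ‖(N : ℝ)⁻¹‖ₑ ^ 2 * ∑ j ∈ Finset.range N, ‖gradient (radialCutoff E (4 ^ j * R)) x‖ₑ ^ 2 := by
  have gradient_eq : gradient (logCutoff E R N) x =
      (N : ℝ)⁻¹ • ∑ j ∈ Finset.range N, gradient (radialCutoff E (4 ^ j * R)) x := by
    have differentiable (j : ℕ) : DifferentiableAt ℝ (radialCutoff E (4 ^ j * R)) x :=
      (contDiff_radialCutoff _).differentiable (by simp) x
    have fderiv_eq : fderiv ℝ (logCutoff E R N) x =
        (N : ℝ)⁻¹ • ∑ j ∈ Finset.range N, fderiv ℝ (radialCutoff E (4 ^ j * R)) x := by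
      unfold logCutoff
      rw [fderiv_fun_const_smul (DifferentiableAt.fun_sum fun j _ => differentiable j),
        fderiv_fun_sum fun j _ => differentiable j]
    simp [gradient, fderiv_eq]
  rw [gradient_eq, enorm_smul, mul_pow]
  gcongr
  exact enorm_sum_sq_le_of_subsingleton_support (subsingleton_support_gradient_radialCutoff hR x)

/-- Large balls have at most quadratic measure. Then balls centred at the origin have vanishing
`2`-capacity in the sense of `HasQuadraticGrowth.exists_smooth_cutoff`, so that cutting off at
infinity costs no Dirichlet energy. -/
def HasQuadraticGrowth {X : Type*} [PseudoMetricSpace X] [Zero X] [MeasurableSpace X]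
    (μ : Measure X) : Prop :=
  ∃ C : ℝ≥0, ∀ r : ℝ, 1 ≤ r → μ (ball 0 r) ≤ C * ENNReal.ofReal r ^ 2

variable [MeasurableSpace E] [BorelSpace E] {μ : Measure E}

lemma HasQuadraticGrowth.exists_lintegral_gradient_radialCutoff_le (hμ : HasQuadraticGrowth μ) :
    ∃ C : ℝ≥0, ∀ r, 1 ≤ r → ∫⁻ x, ‖gradient (radialCutoff E r) x‖ₑ ^ 2 ∂μ ≤ C := by
  obtain ⟨C, hC⟩ := hμ
  obtain ⟨M, hM⟩ := exists_norm_gradient_radialCutoff_le E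
  refine ⟨9 * M ^ 2 * C, fun r hr => ?_⟩
  have r_pos : 0 < r := by linarith
  have ofReal_r_ne : ENNReal.ofReal r ≠ 0 := (ENNReal.ofReal_pos.2 r_pos).ne'
  have enorm_le (x : E) : ‖gradient (radialCutoff E r) x‖ₑ ^ 2 ≤
      (ball 0 (3 * r)).indicator (fun _ => (M / ENNReal.ofReal r) ^ 2) x := by
    by_cases hx : x ∈ ball 0 (3 * r)
    · rw [indicator_of_mem hx, ← ofReal_norm, ← ENNReal.ofReal_coe_nnreal,
        ← ENNReal.ofReal_div_of_pos r_pos]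
      have := hM r r_pos x
      gcongr
    · have : 2 * r < ‖x‖ := by linarith [not_lt.1 (mt mem_ball_zero_iff.2 hx)]
      simp [gradient_radialCutoff_eq_zero r_pos (.inr this)]
  calc ∫⁻ x, ‖gradient (radialCutoff E r) x‖ₑ ^ 2 ∂μ
      ≤ (M / ENNReal.ofReal r) ^ 2 * μ (ball 0 (3 * r)) := by
        grw [lintegral_mono enorm_le, lintegral_indicator measurableSet_ball, setLIntegral_const]
    _ ≤ (M / ENNReal.ofReal r) ^ 2 * (C * ENNReal.ofReal (3 * r) ^ 2) := by
        gcongr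
        exact hC _ (by linarith)
    _ = 9 * M ^ 2 * C * (ENNReal.ofReal r / ENNReal.ofReal r) ^ 2 := by
        simp only [ENNReal.ofReal_mul (zero_le_three (α := ℝ)), ENNReal.ofReal_ofNat,
          div_eq_mul_inv]
        ring
    _ = (9 * M ^ 2 * C : ℝ≥0) := by
        rw [ENNReal.div_self ofReal_r_ne ENNReal.ofReal_ne_top]
        simp

-- The gradients of the radial cutoffs have disjoint supports and bounded energy, so the energy of
-- their average over `N` scales is of order `N / N ^ 2`.
lemma lintegral_gradient_logCutoff_le {C : ℝ≥0}
    (hC : ∀ r, 1 ≤ r → ∫⁻ x, ‖gradient (radialCutoff E r) x‖ₑ ^ 2 ∂μ ≤ C) (hR : 1 ≤ R)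
    (hN : N ≠ 0) :
    ∫⁻ x, ‖gradient (logCutoff E R N) x‖ₑ ^ 2 ∂μ ≤ C / N := by
  have inv_ne_top : (N : ℝ≥0∞)⁻¹ ≠ ⊤ := ENNReal.inv_ne_top.2 (Nat.cast_ne_zero.2 hN)
  have enorm_inv : ‖(N : ℝ)⁻¹‖ₑ = (N : ℝ≥0∞)⁻¹ := by
    rw [enorm_inv (Nat.cast_ne_zero.2 hN)]
    simp
  calc ∫⁻ x, ‖gradient (logCutoff E R N) x‖ₑ ^ 2 ∂μ
      ≤ ∫⁻ x, (N : ℝ≥0∞)⁻¹ ^ 2 * ∑ j ∈ Finset.range N,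
          ‖gradient (radialCutoff E (4 ^ j * R)) x‖ₑ ^ 2 ∂μ :=
        lintegral_mono fun x => enorm_inv ▸ enorm_gradient_logCutoff_sq_le (by linarith) N x
    _ = (N : ℝ≥0∞)⁻¹ ^ 2 * ∑ j ∈ Finset.range N,
          ∫⁻ x, ‖gradient (radialCutoff E (4 ^ j * R)) x‖ₑ ^ 2 ∂μ := by
        rw [lintegral_const_mul' _ _ (ENNReal.pow_ne_top inv_ne_top),
          lintegral_finsetSum _ fun _ _ => ?_]
        exact (continuous_gradient ((contDiff_radialCutoff _).of_le
          (by exact_mod_cast le_top))).enorm.measurable.pow_const 2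
    _ ≤ (N : ℝ≥0∞)⁻¹ ^ 2 * ∑ _j ∈ Finset.range N, (C : ℝ≥0∞) := by
        gcongr
        exact hC _ (one_le_mul_of_one_le_of_one_le (one_le_pow₀ (by norm_num)) hR)
    _ = C / N * (N / N) := by
        simp only [Finset.sum_const, Finset.card_range, nsmul_eq_mul, div_eq_mul_inv]
        ring
    _ = C / N := by
        rw [ENNReal.div_self (Nat.cast_ne_zero.2 hN) (ENNReal.natCast_ne_top N), mul_one]

lemma HasQuadraticGrowth.exists_smooth_cutoff (hμ : HasQuadraticGrowth μ) (R : ℝ) {ε : ℝ≥0∞}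
    (hε : ε ≠ 0) :
    ∃ φ : E → ℝ, ContDiff ℝ (⊤ : ℕ∞) φ ∧ HasCompactSupport φ ∧ (∀ x, ‖φ x‖ ≤ 1) ∧
      (∀ x ∈ closedBall 0 R, φ x = 1) ∧ eLpNorm (gradient φ) 2 μ ≤ ε := by
  obtain ⟨C, hC⟩ := hμ.exists_lintegral_gradient_radialCutoff_le
  obtain ⟨N, hN⟩ := ENNReal.exists_nat_gt
    (ENNReal.div_ne_top ENNReal.coe_ne_top (pow_ne_zero 2 hε) : (C : ℝ≥0∞) / ε ^ 2 ≠ ⊤)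
  have N_ne : N ≠ 0 := by
    rintro rfl
    simp at hN
  have R_pos : 0 < max R 1 := by positivity
  refine ⟨logCutoff E (max R 1) N, contDiff_logCutoff _ N, hasCompactSupport_logCutoff R_pos N,
    norm_logCutoff_le_one _ N, fun x hx => logCutoff_eq_one R_pos N_ne
      ((mem_closedBall_zero_iff.1 hx).trans (le_max_left _ _)), ?_⟩
  rw [← ENNReal.pow_le_pow_left_iff two_ne_zero, eLpNorm_two_sq]
  refine (lintegral_gradient_logCutoff_le hC (le_max_right R 1) N_ne).trans
    (ENNReal.div_le_of_le_mul ?_)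
  rw [mul_comm]
  exact (ENNReal.div_le_iff_le_mul (.inl (pow_ne_zero 2 hε))
    (.inr (Nat.cast_ne_zero.2 N_ne))).1 hN.le

lemma HasQuadraticGrowth.exists_seq_smooth_cutoff (hμ : HasQuadraticGrowth μ) :
    ∃ φ : ℕ → E → ℝ, (∀ k, ContDiff ℝ (⊤ : ℕ∞) (φ k)) ∧ (∀ k, HasCompactSupport (φ k)) ∧
      (∀ k x, ‖φ k x‖ ≤ 1) ∧ (∀ x, Tendsto (φ · x) atTop (𝓝 1)) ∧
      Tendsto (fun k => eLpNorm (gradient (φ k)) 2 μ) atTop (𝓝 0) := by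
  choose φ φ_smooth φ_supp φ_le φ_one φ_gradient_le using fun k : ℕ =>
    hμ.exists_smooth_cutoff k (ENNReal.inv_ne_zero.2 (ENNReal.natCast_ne_top k))
  refine ⟨φ, φ_smooth, φ_supp, φ_le, fun x => tendsto_const_nhds.congr' ?_,
    tendsto_of_tendsto_of_tendsto_of_le_of_le tendsto_const_nhds
      ENNReal.tendsto_inv_nat_nhds_zero (fun _ => zero_le) φ_gradient_le⟩
  filter_upwards [tendsto_natCast_atTop_atTop.eventually_ge_atTop ‖x‖] with k hk
    using (φ_one k x (mem_closedBall_zero_iff.2 hk)).symm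

end LogarithmicCutoff

section Density

variable {n : ℕ} {m : Measure (Euc n)} {u b : Euc n → ℝ} {v V : Euc n → Euc n}

/-- The pair `(u, v)` of a function and a candidate gradient is a limit of pairs `(f, ∇f)` of test
functions `f`, in `L¹_loc` for the functions and in `L²(m)` for the gradients. -/
def IsLimitOfTestFunctions (m : Measure (Euc n)) (u : Euc n → ℝ) (v : Euc n → Euc n) : Prop :=
  ∀ K, IsCompact K → ∀ ε : ℝ≥0∞, ε ≠ 0 → ∃ f : Euc n → ℝ, ContDiff ℝ (⊤ : ℕ∞) f ∧
    HasCompactSupport f ∧ eLpNorm (f - u) 1 (volume.restrict K) ≤ ε ∧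
      eLpNorm (gradient f - v) 2 m ≤ ε

namespace IsLimitOfTestFunctions

lemma of_tendsto {b : ℕ → Euc n → ℝ} {V : ℕ → Euc n → Euc n}
    (h : ∀ k, IsLimitOfTestFunctions m (b k) (V k)) (hb : ∀ k, AEStronglyMeasurable (b k))
    (hu : AEStronglyMeasurable u) (hV : ∀ k, AEStronglyMeasurable (V k) m)
    (hv : AEStronglyMeasurable v m)
    (hb_lim : ∀ K, IsCompact K →
      Tendsto (fun k => eLpNorm (b k - u) 1 (volume.restrict K)) atTop (𝓝 0))
    (hV_lim : Tendsto (fun k => eLpNorm (V k - v) 2 m) atTop (𝓝 0)) :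
    IsLimitOfTestFunctions m u v := by
  intro K hK ε hε
  have half_pos : 0 < ε / 2 := ENNReal.half_pos hε
  obtain ⟨k, hb_k, hV_k⟩ :=
    ((hb_lim K hK).eventually_le_const half_pos |>.and (hV_lim.eventually_le_const half_pos)).exists
  obtain ⟨f, f_smooth, f_supp, f_le, gradient_le⟩ := h k K hK (ε / 2) half_pos.ne'
  have gradient_meas : AEStronglyMeasurable (gradient f) m :=
    (continuous_gradient (f_smooth.of_le (by exact_mod_cast le_top))).aestronglyMeasurable
  refine ⟨f, f_smooth, f_supp, ?_, ?_⟩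
  · rw [← sub_add_sub_cancel f (b k) u, ← ENNReal.add_halves ε]
    grw [eLpNorm_add_le (f_smooth.continuous.aestronglyMeasurable.sub (hb k).restrict)
      ((hb k).sub hu).restrict le_rfl, f_le, hb_k]
  · rw [← sub_add_sub_cancel (gradient f) (V k) v, ← ENNReal.add_halves ε]
    grw [eLpNorm_add_le (gradient_meas.sub (hV k)) ((hV k).sub hv) one_le_two, gradient_le, hV_k]

lemma exists_seq (h : IsLimitOfTestFunctions m u v) :
    ∃ f : ℕ → Euc n → ℝ, (∀ k, ContDiff ℝ (⊤ : ℕ∞) (f k) ∧ HasCompactSupport (f k)) ∧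
      (∀ K, IsCompact K →
        Tendsto (fun k => eLpNorm (f k - u) 1 (volume.restrict K)) atTop (𝓝 0)) ∧
      Tendsto (fun k => eLpNorm (gradient (f k) - v) 2 m) atTop (𝓝 0) := by
  choose f f_smooth f_supp f_le gradient_le using fun k : ℕ =>
    h (closedBall 0 k) (isCompact_closedBall 0 _) (k : ℝ≥0∞)⁻¹ (by simp)
  refine ⟨f, fun k => ⟨f_smooth k, f_supp k⟩, fun K hK => ?_,
    tendsto_of_tendsto_of_tendsto_of_le_of_le tendsto_const_nhds ENNReal.tendsto_inv_nat_nhds_zero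
      (fun _ => zero_le) gradient_le⟩
  obtain ⟨R, hR⟩ := hK.isBounded.subset_closedBall 0
  refine tendsto_of_tendsto_of_tendsto_of_le_of_le' tendsto_const_nhds
    ENNReal.tendsto_inv_nat_nhds_zero (.of_forall fun _ => zero_le) ?_
  filter_upwards [tendsto_natCast_atTop_atTop.eventually_ge_atTop R] with k hk
  refine (eLpNorm_mono_measure _ (Measure.restrict_mono ?_ le_rfl)).trans (f_le k)
  exact hR.trans (closedBall_subset_closedBall hk)

end IsLimitOfTestFunctions

lemma memLp_smul_add_smul_gradient [IsLocallyFiniteMeasure m] {φ : Euc n → ℝ}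
    (hφ : ContDiff ℝ 1 φ) (hφ_supp : HasCompactSupport φ) (hb : AEStronglyMeasurable b m) {B : ℝ≥0}
    (hb_le : ∀ x, ‖b x‖ ≤ B) {p : ℝ≥0∞} (hV : MemLp V p m) :
    MemLp (fun x => φ x • V x + b x • gradient φ x) p m := by
  have φ_memLp : MemLp φ ⊤ m := hφ.continuous.memLp_of_hasCompactSupport hφ_supp
  have gradient_memLp : MemLp (gradient φ) p m :=
    (continuous_gradient hφ).memLp_of_hasCompactSupport (hasCompactSupport_gradient hφ_supp)
  have b_memLp : MemLp b ⊤ m := memLp_top_of_bound hb B (.of_forall hb_le)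
  exact (hV.smul φ_memLp).add (gradient_memLp.smul b_memLp)

lemma tendsto_eLpNorm_smul_add_smul_gradient_sub {φ : ℕ → Euc n → ℝ}
    (hφ : ∀ k, ContDiff ℝ 1 (φ k)) (hφ_le : ∀ k x, ‖φ k x‖ ≤ 1)
    (hφ_lim : ∀ x, Tendsto (fun k => φ k x) atTop (𝓝 1))
    (hφ_gradient : Tendsto (fun k => eLpNorm (gradient (φ k)) 2 m) atTop (𝓝 0))
    (hb : AEStronglyMeasurable b m) {B : ℝ≥0} (hb_le : ∀ x, ‖b x‖ ≤ B) (hV : MemLp V 2 m) :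
    Tendsto (fun k => eLpNorm ((fun x => φ k x • V x + b x • gradient (φ k) x) - V) 2 m) atTop
      (𝓝 0) := by
  have φ_meas (k : ℕ) : AEStronglyMeasurable (φ k) m := (hφ k).continuous.aestronglyMeasurable
  have φV_lim := tendsto_eLpNorm_smul_sub_self two_ne_zero ENNReal.ofNat_ne_top φ_meas hφ_le
    (.of_forall hφ_lim) hV
  have bφ'_lim := tendsto_eLpNorm_smul_of_bounded hb_le hφ_gradient
  refine tendsto_of_tendsto_of_tendsto_of_le_of_le tendsto_const_nhds
    (by simpa only [add_zero] using φV_lim.add bφ'_lim) (fun _ => zero_le) fun k => ?_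
  have split : (fun x => φ k x • V x + b x • gradient (φ k) x) - V =
      ((fun x => φ k x • V x) - V) + fun x => b x • gradient (φ k) x :=
    add_sub_right_comm (fun x => φ k x • V x) (fun x => b x • gradient (φ k) x) V
  rw [split]
  exact eLpNorm_add_le (((φ_meas k).smul hV.1).sub hV.1)
    (hb.smul (continuous_gradient (hφ k)).aestronglyMeasurable) one_le_two

variable {w : Euc n → ℝ≥0∞}

namespace IsDistribGradOn

lemma isLimitOfTestFunctions_of_hasCompactSupport (h : IsDistribGradOn b V univ)
    (hw : IsMuckenhouptA2 volume w) (hb : LocallyIntegrable b) (hb_supp : HasCompactSupport b)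
    (hV : MemLp V 2 (volume.withDensity w)) :
    IsLimitOfTestFunctions (volume.withDensity w) b V := by
  intro K hK ε hε
  have ε_pos : 0 < ε := pos_iff_ne_zero.2 hε
  obtain ⟨j, b_le, V_le⟩ :=
    ((tendsto_eLpNorm_one_mollify_sub_restrict hb hK).eventually_le_const ε_pos |>.and
      ((hw.tendsto_eLpNorm_mollify_sub hV).eventually_le_const ε_pos)).exists
  refine ⟨_, contDiff_mollify hb, hasCompactSupport_mollify hb_supp, b_le, ?_⟩
  have gradient_eq : gradient (mollify volume (shrinkingBump (Euc n) j) b) =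
      mollify volume (shrinkingBump (Euc n) j) V :=
    funext fun x => h.gradient_mollify_apply hb (subset_univ _)
  rwa [gradient_eq]

lemma isLimitOfTestFunctions_of_bounded (h : IsDistribGradOn b V univ)
    (hw : IsMuckenhouptA2 volume w) (hm : HasQuadraticGrowth (volume.withDensity w))
    (hb : AEStronglyMeasurable b) {B : ℝ≥0} (hb_le : ∀ x, ‖b x‖ ≤ B)
    (hV : MemLp V 2 (volume.withDensity w)) :
    IsLimitOfTestFunctions (volume.withDensity w) b V := by
  have b_locInt : LocallyIntegrable b :=
    (locallyIntegrable_const (B : ℝ)).mono hb (.of_forall fun x => by simpa using hb_le x)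
  have b_meas : AEStronglyMeasurable b (volume.withDensity w) :=
    hb.mono_ac (withDensity_absolutelyContinuous _ _)
  have := hw.isLocallyFiniteMeasure_withDensity
  obtain ⟨φ, φ_smooth, φ_supp, φ_le, φ_lim, φ_gradient_lim⟩ := hm.exists_seq_smooth_cutoff
  have φ_cont (k : ℕ) := (φ_smooth k).continuous
  have V_memLp (k : ℕ) :
      MemLp (fun x => φ k x • V x + b x • gradient (φ k) x) 2 (volume.withDensity w) :=
    memLp_smul_add_smul_gradient ((φ_smooth k).of_le (by exact_mod_cast le_top)) (φ_supp k)
      b_meas hb_le hV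
  refine .of_tendsto (fun k => (h.smooth_mul b_locInt (hw.locallyIntegrable_of_memLp hV)
      (φ_smooth k)).isLimitOfTestFunctions_of_hasCompactSupport hw
        (b_locInt.continuous_smul (φ_cont k)) (φ_supp k).mul_right (V_memLp k))
    (fun k => (φ_cont k).aestronglyMeasurable.mul hb) hb (fun k => (V_memLp k).1) hV.1
    (fun K hK => ?_) ?_
  · exact tendsto_eLpNorm_smul_sub_self one_ne_zero ENNReal.one_ne_top
      (fun k => (φ_cont k).aestronglyMeasurable) φ_le (.of_forall φ_lim)
      (memLp_one_iff_integrable.2 (b_locInt.integrableOn_isCompact hK))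
  · exact tendsto_eLpNorm_smul_add_smul_gradient_sub
      (fun k => (φ_smooth k).of_le (by exact_mod_cast le_top)) φ_le φ_lim φ_gradient_lim
      b_meas hb_le hV

end IsDistribGradOn

/-- The bounded smooth truncation `t ↦ sin (h t) / h` of the identity at `h = 1 / (k + 1)`. -/
def sinTruncation (k : ℕ) (t : ℝ) : ℝ :=
  (k + 1) * Real.sin (t / (k + 1))

lemma hasDerivAt_sinTruncation (k : ℕ) (t : ℝ) :
    HasDerivAt (sinTruncation k) (Real.cos (t / (k + 1))) t := by
  have k_ne : (k : ℝ) + 1 ≠ 0 := by positivity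
  have := (((hasDerivAt_id t).div_const ((k : ℝ) + 1)).sin).const_mul ((k : ℝ) + 1)
  refine this.congr_deriv ?_
  simp only [id]
  field_simp

lemma contDiff_sinTruncation (k : ℕ) : ContDiff ℝ 1 (sinTruncation k) := by
  unfold sinTruncation
  fun_prop

lemma norm_sinTruncation_le (k : ℕ) (t : ℝ) : ‖sinTruncation k t‖ ≤ (k + 1 : ℝ≥0) := by
  rw [sinTruncation, norm_mul, Real.norm_of_nonneg (by positivity)]
  push_cast
  exact mul_le_of_le_one_right (by positivity) (Real.abs_sin_le_one _)

lemma sinTruncation_eq_sinc_mul (k : ℕ) (t : ℝ) :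
    sinTruncation k t = Real.sinc (t / (k + 1)) * t := by
  rcases eq_or_ne t 0 with rfl | ht
  · simp [sinTruncation]
  · have k_ne : (k : ℝ) + 1 ≠ 0 := by positivity
    rw [sinTruncation, Real.sinc_of_ne_zero (by positivity)]
    field_simp

lemma tendsto_comp_div_natCast_add_one {g : ℝ → ℝ} (hg : Continuous g) (t : ℝ) :
    Tendsto (fun k : ℕ => g (t / ((k : ℝ) + 1))) atTop (𝓝 (g 0)) :=
  (hg.tendsto 0).comp
    (by simpa [div_eq_mul_inv] using tendsto_one_div_add_atTop_nhds_zero_nat.const_mul t)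

namespace IsDistribGradOn

lemma sinTruncation_comp {E : Set (Euc n)} (h : IsDistribGradOn u v E) (hE : IsOpen E)
    (hu : LocallyIntegrable u) (hv : LocallyIntegrable v) (k : ℕ) :
    IsDistribGradOn (fun x => sinTruncation k (u x)) (fun x => Real.cos (u x / (k + 1)) • v x)
      E := by
  have deriv_eq (t : ℝ) : deriv (sinTruncation k) t = Real.cos (t / (k + 1)) :=
    (hasDerivAt_sinTruncation k t).deriv
  simpa only [deriv_eq] using h.comp_of_bounded (B' := 1) hE hu hv (contDiff_sinTruncation k)
    (norm_sinTruncation_le k) fun t => by simpa [deriv_eq] using Real.abs_cos_le_one _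

theorem isLimitOfTestFunctions {Γ : Set (Euc n)} (h : IsDistribGradOn u v Γᶜ)
    (hΓ_closed : IsClosed Γ) (hΓ : HasNullMinkowskiContent volume Γ)
    (hw : IsMuckenhouptA2 volume w) (hm : HasQuadraticGrowth (volume.withDensity w))
    (hu : LocallyIntegrable u) (hv : MemLp v 2 (volume.withDensity w)) :
    IsLimitOfTestFunctions (volume.withDensity w) u v := by
  have u_meas := hu.aestronglyMeasurable
  have cos_meas (k : ℕ) : AEStronglyMeasurable (fun x => Real.cos (u x / (k + 1)))
      (volume.withDensity w) :=
    (Real.continuous_cos.comp (continuous_id.div_const _)).comp_aestronglyMeasurable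
      (u_meas.mono_ac (withDensity_absolutelyContinuous _ _))
  let V (k : ℕ) (x : Euc n) : Euc n := Real.cos (u x / (k + 1)) • v x
  have V_memLp (k : ℕ) : MemLp (V k) 2 (volume.withDensity w) :=
    hv.mono ((cos_meas k).smul hv.1) (.of_forall fun x => by
      rw [norm_smul]
      exact mul_le_of_le_one_left (norm_nonneg _) (Real.abs_cos_le_one _))
  have b_meas (k : ℕ) : AEStronglyMeasurable fun x => sinTruncation k (u x) :=
    (contDiff_sinTruncation k).continuous.comp_aestronglyMeasurable u_meas
  have grad_univ (k : ℕ) : IsDistribGradOn (fun x => sinTruncation k (u x)) (V k) univ :=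
    (h.sinTruncation_comp hΓ_closed.isOpen_compl hu
      (hw.locallyIntegrable_of_memLp hv) k).univ_of_compl
        hΓ_closed hΓ (b_meas k) (fun x => norm_sinTruncation_le k _)
        (hw.locallyIntegrable_of_memLp (V_memLp k))
  refine .of_tendsto (fun k => (grad_univ k).isLimitOfTestFunctions_of_bounded hw hm (b_meas k)
    (fun x => norm_sinTruncation_le k _) (V_memLp k)) b_meas u_meas (fun k => (V_memLp k).1) hv.1
    (fun K hK => ?_) ?_
  · simp only [sinTruncation_eq_sinc_mul]
    refine tendsto_eLpNorm_smul_sub_self one_ne_zero ENNReal.one_ne_top (fun k => ?_)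
      (fun k x => Real.abs_sinc_le_one _) (.of_forall fun x => ?_)
      (memLp_one_iff_integrable.2 (hu.integrableOn_isCompact hK))
    · exact ((Real.continuous_sinc.comp (continuous_id.div_const _)).comp_aestronglyMeasurable
        u_meas).restrict
    · exact Real.sinc_zero ▸ tendsto_comp_div_natCast_add_one Real.continuous_sinc (u x)
  · refine tendsto_eLpNorm_smul_sub_self two_ne_zero ENNReal.ofNat_ne_top cos_meas
      (fun k x => Real.abs_cos_le_one _) (.of_forall fun x => ?_) hv
    exact Real.cos_zero ▸ tendsto_comp_div_natCast_add_one Real.continuous_cos (u x)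

end IsDistribGradOn

end Density

section RieszKernel

variable {E : Type*} [NormedAddCommGroup E] [NormedSpace ℝ E]

/-- The Riesz kernel `‖z‖ ^ (1 - dim E)` of order one, truncated to the ball of radius `R`. -/
def truncatedRieszKernel (R : ℝ) (z : E) : ℝ :=
  (Iio R).indicator (fun r => r ^ (1 - finrank ℝ E : ℝ)) ‖z‖

lemma truncatedRieszKernel_nonneg (R : ℝ) (z : E) : 0 ≤ truncatedRieszKernel R z :=
  indicator_apply_nonneg fun _ => Real.rpow_nonneg (norm_nonneg z) _

lemma rpow_le_truncatedRieszKernel [Nontrivial E] [FiniteDimensional ℝ E] {R r : ℝ} {z : E}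
    (hz : z ≠ 0) (hzr : ‖z‖ ≤ r) (hzR : ‖z‖ < R) :
    r ^ (1 - finrank ℝ E : ℝ) ≤ truncatedRieszKernel R z := by
  rw [truncatedRieszKernel, indicator_of_mem (mem_Iio.2 hzR)]
  refine Real.rpow_le_rpow_of_nonpos (norm_pos_iff.2 hz) hzr ?_
  have : (1 : ℝ) ≤ finrank ℝ E := by exact_mod_cast Module.finrank_pos (R := ℝ) (M := E)
  linarith

variable [MeasurableSpace E] [BorelSpace E]

lemma measurable_truncatedRieszKernel (R : ℝ) : Measurable (truncatedRieszKernel (E := E) R) :=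
  (Measurable.indicator (by fun_prop) measurableSet_Iio).comp measurable_norm

variable [FiniteDimensional ℝ E] [Nontrivial E] (μ : Measure E) [μ.IsAddHaarMeasure]

lemma lintegral_truncatedRieszKernel {R : ℝ} (hR : 0 ≤ R) :
    ∫⁻ z, ENNReal.ofReal (truncatedRieszKernel R z) ∂μ =
      ENNReal.ofReal (finrank ℝ E * μ.real (ball 0 1) * R) := by
  have polar_density : ∀ r ∈ Ioi (0 : ℝ), r ^ (finrank ℝ E - 1) •
      (Iio R).indicator (fun r => r ^ (1 - finrank ℝ E : ℝ)) r =
        (Iio R).indicator (fun _ => (1 : ℝ)) r := by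
    intro r hr
    by_cases hrR : r ∈ Iio R
    · rw [indicator_of_mem hrR, indicator_of_mem hrR, smul_eq_mul, ← Real.rpow_natCast,
        ← Real.rpow_add hr, Nat.cast_sub Module.finrank_pos]
      simp
    · simp [indicator_of_notMem hrR]
  have Ioi_inter_Iio : Ioi (0 : ℝ) ∩ Iio R = Ioo 0 R := rfl
  have integrable : Integrable (truncatedRieszKernel R) μ := by
    refine (integrable_fun_norm_addHaar μ).2 ?_
    rw [integrableOn_congr_fun polar_density measurableSet_Ioi, IntegrableOn,
      integrable_indicator_iff measurableSet_Iio, IntegrableOn,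
      Measure.restrict_restrict measurableSet_Iio, inter_comm, Ioi_inter_Iio]
    exact integrable_const 1
  rw [← ofReal_integral_eq_lintegral_ofReal integrable
    (.of_forall (truncatedRieszKernel_nonneg R))]
  simp only [truncatedRieszKernel]
  rw [integral_fun_norm_addHaar μ, setIntegral_congr_fun measurableSet_Ioi polar_density,
    setIntegral_indicator measurableSet_Iio, Ioi_inter_Iio]
  simp [hR, mul_assoc]

lemma lintegral_lintegral_truncatedRieszKernel_sub (ν : Measure E) [SFinite ν] {R : ℝ}
    (hR : 0 ≤ R) :
    ∫⁻ x, ∫⁻ y, ENNReal.ofReal (truncatedRieszKernel R (x - y)) ∂ν ∂μ =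
      ENNReal.ofReal (finrank ℝ E * μ.real (ball 0 1) * R) * ν univ := by
  have kernel_meas : Measurable fun p : E × E =>
      ENNReal.ofReal (truncatedRieszKernel R (p.1 - p.2)) :=
    ((measurable_truncatedRieszKernel R).comp (measurable_fst.sub measurable_snd)).ennreal_ofReal
  rw [lintegral_lintegral_swap kernel_meas.aemeasurable]
  simp only [lintegral_sub_right_eq_self fun z => ENNReal.ofReal (truncatedRieszKernel R z),
    lintegral_truncatedRieszKernel μ hR, lintegral_const]

end RieszKernel

section DistanceWeight

variable {n : ℕ} {d : ℝ} {Γ : Set (Euc n)} {S : Set (Euc n)} {s : ℝ}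

lemma measurable_weightW : Measurable (weightW n d Γ) :=
  (continuous_infDist_pt Γ).measurable.pow_const _

lemma weightW_eq_zero (hdn : d < n - 1) {x : Euc n} (hx : x ∈ Γ) : weightW n d Γ x = 0 := by
  rw [weightW, infDist_zero_of_mem hx, Real.zero_rpow (by linarith)]

lemma weightW_pos (hcl : IsClosed Γ) (hne : Γ.Nonempty) {x : Euc n} (hx : x ∉ Γ) :
    0 < weightW n d Γ x :=
  Real.rpow_pos_of_pos ((hcl.notMem_iff_infDist_pos hne).1 hx) _

lemma measW_le_of_le_infDist (hdn : d < n - 1) (hs : 0 < s) (hS : MeasurableSet S)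
    (hS_le : ∀ x ∈ S, s ≤ infDist x Γ) :
    measW n d Γ S ≤ ENNReal.ofReal (s ^ (d + 1 - n)) * volume S := by
  rw [measW, withDensity_apply _ hS, ← setLIntegral_const]
  exact setLIntegral_mono' hS fun x hx => ENNReal.ofReal_le_ofReal <|
    Real.rpow_le_rpow_of_nonpos hs (hS_le x hx) (by linarith)

lemma inv_weightW_le (hdn : d < n - 1) {x : Euc n} (hx : infDist x Γ ≤ s) :
    (weightW n d Γ x)⁻¹ ≤ s ^ (n - 1 - d) := by
  rw [weightW, ← Real.rpow_neg infDist_nonneg]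
  convert Real.rpow_le_rpow infDist_nonneg hx (by linarith : 0 ≤ n - 1 - d) using 2
  ring

lemma setLIntegral_inv_weightW_le (hdn : d < n - 1) (hcl : IsClosed Γ) (hne : Γ.Nonempty)
    (hΓ : volume Γ = 0) (hS : MeasurableSet S) (hS_le : ∀ x ∈ S, infDist x Γ ≤ s) :
    ∫⁻ x in S, (ENNReal.ofReal (weightW n d Γ x))⁻¹ ≤
      ENNReal.ofReal (s ^ (n - 1 - d)) * volume S := by
  rw [← setLIntegral_const]
  refine setLIntegral_mono_ae' hS ?_
  filter_upwards [measure_eq_zero_iff_ae_notMem.1 hΓ] with x hxΓ hxS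
  rw [← ENNReal.ofReal_inv_of_pos (weightW_pos hcl hne hxΓ)]
  exact ENNReal.ofReal_le_ofReal (inv_weightW_le hdn (hS_le x hxS))

lemma volume_le_measW (hdn : d < n - 1) (hcl : IsClosed Γ) (hne : Γ.Nonempty)
    (hΓ : volume Γ = 0) (hS : MeasurableSet S) (hS_le : ∀ x ∈ S, infDist x Γ ≤ s) :
    volume S ≤ ENNReal.ofReal (s ^ (n - 1 - d)) * measW n d Γ S := by
  rw [measW, withDensity_apply _ hS, ← lintegral_const_mul' _ _ ENNReal.ofReal_ne_top,
    ← setLIntegral_one]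
  refine setLIntegral_mono_ae' hS ?_
  filter_upwards [measure_eq_zero_iff_ae_notMem.1 hΓ] with x hxΓ hxS
  have weight_pos := weightW_pos (d := d) hcl hne hxΓ
  rw [← ENNReal.ofReal_mul' weight_pos.le, ENNReal.one_le_ofReal]
  exact (inv_le_iff_one_le_mul₀ weight_pos).1 (inv_weightW_le hdn (hS_le x hxS))

lemma measW_ball_mul_setLIntegral_inv_le (hdn : d < n - 1) (hcl : IsClosed Γ) (hne : Γ.Nonempty)
    (hΓ : volume Γ = 0) {x : Euc n} {r : ℝ} (hr : 0 < r) (hx : 2 * r ≤ infDist x Γ) :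
    measW n d Γ (ball x r) * ∫⁻ y in ball x r, (ENNReal.ofReal (weightW n d Γ y))⁻¹ ≤
      ENNReal.ofReal (3 ^ (n - 1 - d)) * volume (ball x r) ^ 2 := by
  set D := infDist x Γ
  have D_pos : 0 < D := by linarith
  have weight_le := measW_le_of_le_infDist (Γ := Γ) (s := D / 2) hdn (half_pos D_pos)
    measurableSet_ball fun y (hy : y ∈ ball x r) => by
      linarith [infDist_le_infDist_add_dist (s := Γ) (x := x) (y := y), mem_ball'.1 hy]
  have inv_weight_le := setLIntegral_inv_weightW_le (s := 3 * (D / 2)) hdn hcl hne hΓ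
    measurableSet_ball fun y (hy : y ∈ ball x r) => by
      linarith [infDist_le_infDist_add_dist (s := Γ) (x := y) (y := x), mem_ball.1 hy]
  have exponents : (D / 2) ^ (d + 1 - n) * (3 * (D / 2)) ^ (n - 1 - d) = 3 ^ (n - 1 - d) := by
    rw [Real.mul_rpow (by positivity) (by positivity), mul_left_comm,
      ← Real.rpow_add (by positivity)]
    ring_nf
    simp
  grw [weight_le, inv_weight_le, ← exponents, ENNReal.ofReal_mul (by positivity)]
  exact le_of_eq (by ring)

end DistanceWeight

namespace AhlforsRegular

variable {n : ℕ} {d C₀ : ℝ} {Γ : Set (Euc n)}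

lemma volume_eq_zero (h : AhlforsRegular n d C₀ Γ) (hdn : d < n) : volume Γ = 0 := by
  have hausdorff_eq_zero : μH[(n : ℝ)] Γ = 0 := by
    refine measure_null_of_locally_null Γ fun x hx => ⟨Γ ∩ ball x 1,
      inter_mem_nhdsWithin Γ (ball_mem_nhds x one_pos), ?_⟩
    exact (Measure.hausdorffMeasure_zero_or_top hdn _).resolve_right
      ((h x hx 1 one_pos).2.trans_lt ENNReal.ofReal_lt_top).ne
  refine Measure.absolutelyContinuous_isAddHaarMeasure volume μH[(finrank ℝ (Euc n) : ℝ)] ?_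
  rwa [finrank_euclideanSpace_fin]

lemma hausdorffMeasure_inter_ball_le (h : AhlforsRegular n d C₀ Γ) (x : Euc n) {r : ℝ}
    (hr : 0 < r) : μH[d] (Γ ∩ ball x r) ≤ ENNReal.ofReal (C₀ * (2 * r) ^ d) := by
  rcases (Γ ∩ ball x r).eq_empty_or_nonempty with h_empty | ⟨γ, hγΓ, hγ⟩
  · simp [h_empty]
  · refine (measure_mono (inter_subset_inter_right Γ ?_)).trans
      (h γ hγΓ (2 * r) (by positivity)).2
    exact ball_subset_ball' (by linarith [mem_ball'.1 hγ])

variable [NeZero n]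

lemma ofReal_weightW_le (h : AhlforsRegular n d C₀ Γ) (hC₀ : 0 < C₀) (hdn : d < n - 1)
    (hcl : IsClosed Γ) (hne : Γ.Nonempty) {x x₀ : Euc n} {r s : ℝ} (hr : x ∈ ball x₀ r)
    (hs : infDist x Γ < s) :
    ENNReal.ofReal (weightW n d Γ x) ≤ ENNReal.ofReal (2 ^ (n - 1 : ℝ) * C₀) *
      ∫⁻ y in Γ ∩ ball x₀ (r + 2 * s),
        ENNReal.ofReal (truncatedRieszKernel (2 * s) (x - y)) ∂μH[d] := by
  by_cases hx : x ∈ Γ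
  · simp [weightW_eq_zero hdn hx]
  obtain ⟨γ, hγ, dist_eq⟩ := hcl.exists_infDist_eq_dist hne x
  set t := infDist x Γ with ht
  have t_pos : 0 < t := (hcl.notMem_iff_infDist_pos hne).1 hx
  have ball_sub : ball γ t ⊆ ball x (2 * t) := ball_subset_ball' (by rw [dist_comm γ x]; linarith)
  have kernel_ge : ∀ y ∈ Γ ∩ ball γ t, ENNReal.ofReal ((2 * t) ^ (1 - n : ℝ)) ≤
      ENNReal.ofReal (truncatedRieszKernel (2 * s) (x - y)) := by
    rintro y ⟨hyΓ, hy⟩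
    have norm_lt : ‖x - y‖ < 2 * t := mem_ball_iff_norm'.1 (ball_sub hy)
    refine ENNReal.ofReal_le_ofReal ?_
    have sub_ne : x - y ≠ 0 := sub_ne_zero.2 (ne_of_mem_of_not_mem hyΓ hx).symm
    simpa using rpow_le_truncatedRieszKernel sub_ne norm_lt.le (norm_lt.trans (by linarith))
  have weight_eq : weightW n d Γ x =
      2 ^ (n - 1 : ℝ) * C₀ * ((2 * t) ^ (1 - n : ℝ) * (C₀⁻¹ * t ^ d)) := by
    rw [weightW, ← ht, Real.mul_rpow two_pos.le t_pos.le, show d + 1 - (n : ℝ) = 1 - n + d by ring,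
      Real.rpow_add t_pos, ← neg_sub (n : ℝ) 1, Real.rpow_neg two_pos.le]
    field_simp
  rw [weight_eq, ENNReal.ofReal_mul (by positivity),
    ENNReal.ofReal_mul (p := (2 * t) ^ (1 - n : ℝ)) (by positivity)]
  gcongr
  calc ENNReal.ofReal ((2 * t) ^ (1 - n : ℝ)) * ENNReal.ofReal (C₀⁻¹ * t ^ d)
    _ ≤ ENNReal.ofReal ((2 * t) ^ (1 - n : ℝ)) * μH[d] (Γ ∩ ball γ t) := by
        gcongr
        exact (h γ hγ t t_pos).1
    _ = ∫⁻ _ in Γ ∩ ball γ t, ENNReal.ofReal ((2 * t) ^ (1 - n : ℝ)) ∂μH[d] :=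
        (setLIntegral_const _ _).symm
    _ ≤ ∫⁻ y in Γ ∩ ball γ t, ENNReal.ofReal (truncatedRieszKernel (2 * s) (x - y)) ∂μH[d] :=
        setLIntegral_mono' (hcl.measurableSet.inter measurableSet_ball) kernel_ge
    _ ≤ _ := lintegral_mono_set <| inter_subset_inter_right Γ <|
        ball_sub.trans (ball_subset_ball' (by linarith [mem_ball.1 hr]))

lemma exists_measW_ball_inter_thickening_le (h : AhlforsRegular n d C₀ Γ) (hC₀ : 0 < C₀)
    (hdn : d < n - 1) (hcl : IsClosed Γ) (hne : Γ.Nonempty) :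
    ∃ C : ℝ≥0, ∀ x r s, 0 < r → 0 < s →
      measW n d Γ (ball x r ∩ thickening s Γ) ≤ C * ENNReal.ofReal (s * (r + 2 * s) ^ d) := by
  let A : ℝ := n * volume.real (ball (0 : Euc n) 1)
  refine ⟨Real.toNNReal (2 ^ (n - 1 : ℝ) * C₀ * (A * 2) * (C₀ * 2 ^ d)), fun x₀ r s hr hs => ?_⟩
  let ν : Measure (Euc n) := μH[d].restrict (Γ ∩ ball x₀ (r + 2 * s))
  have ν_univ_le : ν univ ≤ ENNReal.ofReal (C₀ * (2 * (r + 2 * s)) ^ d) := by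
    rw [Measure.restrict_apply_univ]
    exact h.hausdorffMeasure_inter_ball_le x₀ (by positivity)
  have : IsFiniteMeasure ν := ⟨ν_univ_le.trans_lt ENNReal.ofReal_lt_top⟩
  have strip_meas : MeasurableSet (ball x₀ r ∩ thickening s Γ) :=
    measurableSet_ball.inter isOpen_thickening.measurableSet
  calc measW n d Γ (ball x₀ r ∩ thickening s Γ)
    _ = ∫⁻ x in ball x₀ r ∩ thickening s Γ, ENNReal.ofReal (weightW n d Γ x) := by
        rw [measW, withDensity_apply _ strip_meas]
    _ ≤ ∫⁻ x, ENNReal.ofReal (2 ^ (n - 1 : ℝ) * C₀) *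
          ∫⁻ y, ENNReal.ofReal (truncatedRieszKernel (2 * s) (x - y)) ∂ν :=
        (setLIntegral_mono' strip_meas fun x hx => h.ofReal_weightW_le hC₀ hdn hcl hne hx.1
          ((mem_thickening_iff_infDist_lt hne).1 hx.2)).trans (setLIntegral_le_lintegral _ _)
    _ = ENNReal.ofReal (2 ^ (n - 1 : ℝ) * C₀) * (ENNReal.ofReal (A * (2 * s)) * ν univ) := by
        rw [lintegral_const_mul' _ _ ENNReal.ofReal_ne_top,
          lintegral_lintegral_truncatedRieszKernel_sub volume ν (by positivity),
          finrank_euclideanSpace_fin]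
    _ ≤ ENNReal.ofReal (2 ^ (n - 1 : ℝ) * C₀) *
          (ENNReal.ofReal (A * (2 * s)) * ENNReal.ofReal (C₀ * (2 * (r + 2 * s)) ^ d)) := by
        gcongr
    _ = _ := by
        have : 0 ≤ A := by positivity
        rw [← ENNReal.ofReal, ← ENNReal.ofReal_mul (by positivity),
          ← ENNReal.ofReal_mul (by positivity), ← ENNReal.ofReal_mul (by positivity),
          Real.mul_rpow two_pos.le (by positivity)]
        congr 1
        ring

lemma exists_measW_ball_le_of_infDist_le (h : AhlforsRegular n d C₀ Γ) (hC₀ : 0 < C₀)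
    (hdn : d < n - 1) (hcl : IsClosed Γ) (hne : Γ.Nonempty) {a : ℝ} (ha : 0 ≤ a) :
    ∃ C : ℝ≥0, ∀ x r, 0 < r → infDist x Γ ≤ a * r →
      measW n d Γ (ball x r) ≤ C * ENNReal.ofReal (r ^ (d + 1)) := by
  obtain ⟨C, hC⟩ := h.exists_measW_ball_inter_thickening_le hC₀ hdn hcl hne
  refine ⟨C * Real.toNNReal ((a + 1) * (1 + 2 * (a + 1)) ^ d), fun x r hr hx => ?_⟩
  have ball_sub : ball x r ⊆ thickening ((a + 1) * r) Γ := fun y hy => by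
    rw [mem_thickening_iff_infDist_lt hne]
    linarith [infDist_le_infDist_add_dist (s := Γ) (x := y) (y := x), mem_ball.1 hy]
  calc measW n d Γ (ball x r)
    _ = measW n d Γ (ball x r ∩ thickening ((a + 1) * r) Γ) := by
        rw [inter_eq_left.2 ball_sub]
    _ ≤ C * ENNReal.ofReal ((a + 1) * r * (r + 2 * ((a + 1) * r)) ^ d) :=
        hC x r _ hr (by positivity)
    _ = C * ENNReal.ofReal ((a + 1) * (1 + 2 * (a + 1)) ^ d * r ^ (d + 1)) := by
        rw [show r + 2 * ((a + 1) * r) = (1 + 2 * (a + 1)) * r by ring,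
          Real.mul_rpow (by positivity) hr.le, Real.rpow_add hr, Real.rpow_one]
        ring_nf
    _ = _ := by
        rw [ENNReal.ofReal_mul (by positivity), ← mul_assoc]
        rfl

lemma exists_measW_ball_mul_setLIntegral_inv_le (h : AhlforsRegular n d C₀ Γ) (hC₀ : 0 < C₀)
    (hdn : d < n - 1) (hcl : IsClosed Γ) (hne : Γ.Nonempty) :
    ∃ C : ℝ≥0, ∀ x r, 0 < r → infDist x Γ ≤ 2 * r →
      measW n d Γ (ball x r) * ∫⁻ y in ball x r, (ENNReal.ofReal (weightW n d Γ y))⁻¹ ≤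
        C * volume (ball x r) ^ 2 := by
  obtain ⟨C, hC⟩ := h.exists_measW_ball_le_of_infDist_le hC₀ hdn hcl hne zero_le_two
  let V : ℝ≥0∞ := volume (ball (0 : Euc n) 1)
  have V_ne_zero : V ≠ 0 := (measure_ball_pos volume 0 one_pos).ne'
  have V_ne_top : V ≠ ∞ := measure_ball_lt_top.ne
  refine ⟨C * Real.toNNReal (3 ^ (n - 1 - d)) * V⁻¹.toNNReal, fun x r hr hx => ?_⟩
  have inv_weight_le := setLIntegral_inv_weightW_le (s := 3 * r) hdn hcl hne
    (h.volume_eq_zero (by linarith)) measurableSet_ball fun y (hy : y ∈ ball x r) => by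
      linarith [infDist_le_infDist_add_dist (s := Γ) (x := y) (y := x), mem_ball.1 hy]
  have exponents : r ^ (d + 1) * (3 * r) ^ (n - 1 - d) = 3 ^ (n - 1 - d) * r ^ n := by
    rw [Real.mul_rpow (by positivity) hr.le, mul_left_comm, ← Real.rpow_add hr,
      ← Real.rpow_natCast]
    ring_nf
  have pow_eq : ENNReal.ofReal (r ^ n) = V⁻¹ * volume (ball x r) := by
    rw [Measure.addHaar_ball_of_pos _ _ hr, finrank_euclideanSpace_fin, mul_left_comm,
      ENNReal.inv_mul_cancel V_ne_zero V_ne_top, mul_one]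
  calc measW n d Γ (ball x r) * ∫⁻ y in ball x r, (ENNReal.ofReal (weightW n d Γ y))⁻¹
    _ ≤ C * ENNReal.ofReal (r ^ (d + 1)) *
          (ENNReal.ofReal ((3 * r) ^ (n - 1 - d)) * volume (ball x r)) := by
        grw [hC x r hr hx, inv_weight_le]
    _ = C * (ENNReal.ofReal (3 ^ (n - 1 - d)) * (V⁻¹ * volume (ball x r))) *
          volume (ball x r) := by
        rw [← pow_eq, ← ENNReal.ofReal_mul (by positivity), ← exponents,
          ENNReal.ofReal_mul (by positivity)]
        ring
    _ = _ := by
        push_cast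
        rw [ENNReal.coe_toNNReal (ENNReal.inv_ne_top.2 V_ne_zero), ENNReal.ofReal]
        ring

lemma isMuckenhouptA2_weightW (h : AhlforsRegular n d C₀ Γ) (hC₀ : 0 < C₀) (hdn : d < n - 1)
    (hcl : IsClosed Γ) (hne : Γ.Nonempty) :
    IsMuckenhouptA2 volume fun x => ENNReal.ofReal (weightW n d Γ x) where
  measurable := measurable_weightW.ennreal_ofReal
  ne_zero := by
    filter_upwards [measure_eq_zero_iff_ae_notMem.1 (h.volume_eq_zero (by linarith))] with x hx
    exact (ENNReal.ofReal_pos.2 (weightW_pos hcl hne hx)).ne'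
  ne_top := .of_forall fun _ => ENNReal.ofReal_ne_top
  mul_le := by
    obtain ⟨C, hC⟩ := h.exists_measW_ball_mul_setLIntegral_inv_le hC₀ hdn hcl hne
    refine ⟨max C (Real.toNNReal (3 ^ (n - 1 - d))), fun x r hr => ?_⟩
    rw [← withDensity_apply _ measurableSet_ball, ENNReal.coe_max]
    rcases le_total (infDist x Γ) (2 * r) with near | far
    · grw [← le_max_left]
      exact hC x r hr near
    · grw [← le_max_right]
      exact measW_ball_mul_setLIntegral_inv_le hdn hcl hne (h.volume_eq_zero (by linarith)) hr far

lemma hasQuadraticGrowth_measW (h : AhlforsRegular n d C₀ Γ) (hC₀ : 0 < C₀) (hdn : d < n - 1)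
    (hd1 : d ≤ 1) (hcl : IsClosed Γ) (hne : Γ.Nonempty) : HasQuadraticGrowth (measW n d Γ) := by
  obtain ⟨C, hC⟩ := h.exists_measW_ball_le_of_infDist_le hC₀ hdn hcl hne
    (infDist_nonneg (x := (0 : Euc n)))
  refine ⟨C, fun r hr => ?_⟩
  grw [hC 0 r (by positivity) (le_mul_of_one_le_right infDist_nonneg hr),
    ← ENNReal.ofReal_pow (by positivity)]
  gcongr
  rw [← Real.rpow_natCast]
  exact Real.rpow_le_rpow_of_exponent_le hr (by norm_num; linarith)

lemma hasNullMinkowskiContent (h : AhlforsRegular n d C₀ Γ) (hC₀ : 0 < C₀) (hdn : d < n - 1)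
    (hcl : IsClosed Γ) (hne : Γ.Nonempty) : HasNullMinkowskiContent volume Γ := by
  obtain ⟨C, hC⟩ := h.exists_measW_ball_inter_thickening_le hC₀ hdn hcl hne
  intro R
  have R_lt : 0 < |R| + 1 := by positivity
  have bound_lim : Tendsto (fun ε : ℝ =>
      C * ENNReal.ofReal (ε ^ (n - 1 - d) * (|R| + 1 + 2 * ε) ^ d)) (𝓝[>] 0) (𝓝 0) := by
    have : ContinuousAt (fun ε : ℝ => ε ^ (n - 1 - d) * (|R| + 1 + 2 * ε) ^ d) 0 :=
      (Real.continuousAt_rpow_const _ _ (.inr (by linarith))).mul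
        (ContinuousAt.rpow_const (by fun_prop) (.inl (by simpa using R_lt.ne')))
    have lim := ENNReal.Tendsto.const_mul (a := (C : ℝ≥0∞)) (ENNReal.tendsto_ofReal this.tendsto)
      (.inr ENNReal.coe_ne_top)
    rw [Real.zero_rpow (by linarith), zero_mul, ENNReal.ofReal_zero, mul_zero] at lim
    exact lim.mono_left nhdsWithin_le_nhds
  refine tendsto_of_tendsto_of_tendsto_of_le_of_le' tendsto_const_nhds bound_lim
    (.of_forall fun _ => zero_le) ?_
  filter_upwards [self_mem_nhdsWithin] with ε ε_pos
  have ε_pos : 0 < ε := ε_pos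
  refine ENNReal.div_le_of_le_mul ?_
  calc volume (ball 0 R ∩ thickening ε Γ)
    _ ≤ volume (ball 0 (|R| + 1) ∩ thickening ε Γ) := by
        gcongr
        linarith [le_abs_self R]
    _ ≤ ENNReal.ofReal (ε ^ (n - 1 - d)) * measW n d Γ (ball 0 (|R| + 1) ∩ thickening ε Γ) :=
        volume_le_measW hdn hcl hne (h.volume_eq_zero (by linarith))
          (measurableSet_ball.inter isOpen_thickening.measurableSet)
          fun x hx => ((mem_thickening_iff_infDist_lt hne).1 hx.2).le
    _ ≤ ENNReal.ofReal (ε ^ (n - 1 - d)) *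
          (C * ENNReal.ofReal (ε * (|R| + 1 + 2 * ε) ^ d)) := by
        gcongr
        exact hC 0 _ ε R_lt ε_pos
    _ = _ := by
        rw [mul_left_comm, mul_assoc, ← ENNReal.ofReal_mul (by positivity),
          ← ENNReal.ofReal_mul (by positivity)]
        ring_nf

end AhlforsRegular

section WeightedSobolev

variable {n : ℕ} {d : ℝ} {Γ : Set (Euc n)} {u : Euc n → ℝ} {v : Euc n → Euc n}

lemma MemW.memLp_indicator (hW : MemW n d Γ u v) (hcl : IsClosed Γ) :
    MemLp (Γᶜ.indicator v) 2 (measW n d Γ) := by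
  have hΓ : MeasurableSet Γᶜ := hcl.measurableSet.compl
  rw [memLp_indicator_iff_restrict hΓ]
  refine ⟨hW.gradLocInt.aestronglyMeasurable.mono_ac
    ((withDensity_absolutelyContinuous _ _).restrict _), ?_⟩
  rw [eLpNorm_two_eq_lintegral_sq]
  refine ENNReal.rpow_lt_top_of_nonneg (by positivity) (ne_of_lt ?_)
  simpa only [ENNReal.ofReal_pow (norm_nonneg _), ofReal_norm] using hW.l2

lemma MemW.isDistribGradOn_indicator (hW : MemW n d Γ u v) (hcl : IsClosed Γ) :
    IsDistribGradOn u (Γᶜ.indicator v) Γᶜ :=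
  hW.isGrad.mono_congr subset_rfl hcl.measurableSet.compl (eqOn_refl u _)
    fun _ hx => indicator_of_mem hx v

lemma tendsto_integral_abs_sub_of_tendsto_eLpNorm {α : Type*} [MeasurableSpace α] {μ : Measure α}
    {f : ℕ → α → ℝ} {g : α → ℝ} (h : Tendsto (fun k => eLpNorm (f k - g) 1 μ) atTop (𝓝 0)) :
    Tendsto (fun k => ∫ x, |f k x - g x| ∂μ) atTop (𝓝 0) := by
  rw [tendsto_zero_iff_enorm_tendsto_zero]
  refine tendsto_of_tendsto_of_tendsto_of_le_of_le tendsto_const_nhds h (fun _ => zero_le)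
    fun k => (enorm_integral_le_lintegral_enorm _).trans_eq ?_
  simp [eLpNorm_one_eq_lintegral_enorm]

lemma setLIntegral_ofReal_norm_sub_sq_le {α F : Type*} [MeasurableSpace α] [NormedAddCommGroup F]
    {μ : Measure α} {S : Set α} (hS : MeasurableSet S) (f g : α → F) :
    ∫⁻ x in S, ENNReal.ofReal (‖f x - g x‖ ^ 2) ∂μ ≤ eLpNorm (f - S.indicator g) 2 μ ^ 2 := by
  rw [eLpNorm_two_sq]
  refine le_trans (setLIntegral_mono' hS fun x hx => ?_) (setLIntegral_le_lintegral S _)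
  simp [indicator_of_mem hx, ENNReal.ofReal_pow]

end WeightedSobolev

/-- when `d ≤ 1`, smooth compactly supported functions are dense in `W`,
with no normalization at infinity. -/
theorem statement9 (n : ℕ) (hn : 2 ≤ n) (d C₀ : ℝ) (hd0 : 0 < d)
    (hdn : d < (n : ℝ) - 1) (hC₀ : 1 ≤ C₀) (hd1 : d ≤ 1)
    (Γ : Set (Euc n)) (hne : Γ.Nonempty) (hcl : IsClosed Γ)
    (hAR : AhlforsRegular n d C₀ Γ)
    (u : Euc n → ℝ) (v : Euc n → Euc n) (hW : MemW n d Γ u v)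
    (hloc : LocallyIntegrable u volume) :
    ∃ uk : ℕ → Euc n → ℝ,
      (∀ k, ContDiff ℝ (⊤ : ℕ∞) (uk k) ∧ HasCompactSupport (uk k)) ∧
      (∀ K : Set (Euc n), IsCompact K →
        Tendsto (fun k => ∫ y in K, |uk k y - u y|) atTop (𝓝 0)) ∧
      Tendsto
        (fun k => ∫⁻ z in Γᶜ,
          ENNReal.ofReal (‖gradient (uk k) z - v z‖ ^ 2) ∂(measW n d Γ))
        atTop (𝓝 0) := by
  have : NeZero n := ⟨by omega⟩
  have C₀_pos : 0 < C₀ := by linarith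
  have limit : IsLimitOfTestFunctions (measW n d Γ) u (Γᶜ.indicator v) :=
    (hW.isDistribGradOn_indicator hcl).isLimitOfTestFunctions hcl
      (hAR.hasNullMinkowskiContent C₀_pos hdn hcl hne)
      (hAR.isMuckenhouptA2_weightW C₀_pos hdn hcl hne)
      (hAR.hasQuadraticGrowth_measW C₀_pos hdn hd1 hcl hne) hloc (hW.memLp_indicator hcl)
  obtain ⟨f, f_test, f_lim, gradient_lim⟩ := limit.exists_seq
  refine ⟨f, f_test, fun K hK => tendsto_integral_abs_sub_of_tendsto_eLpNorm (f_lim K hK), ?_⟩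
  have sq_lim : Tendsto (fun k =>
      eLpNorm (gradient (f k) - Γᶜ.indicator v) 2 (measW n d Γ) ^ 2) atTop (𝓝 0) := by
    simpa using ENNReal.Tendsto.pow (n := 2) gradient_lim
  exact tendsto_of_tendsto_of_tendsto_of_le_of_le tendsto_const_nhds sq_lim (fun _ => zero_le)
    fun k => setLIntegral_ofReal_norm_sub_sq_le hcl.measurableSet.compl _ _
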